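/- arXiv:2201.00984 — 2 statements merged into one kernel-verified Lean document; each statement's English description precedes it below -/
import Mathlib

section
/- Let (R, m) be a commutative Noetherian local ring, let f₁, …, f_c ∈ m be an R-regular sequence, and let N be a finitely generated R-module such that Tor_1^R(N, R/(f₁, …, f_c)) = 0. Then f₁, …, f_c is also an N-regular sequence. -/
open CategoryTheory IsLocalRing

section Prelim

variable (R : Type) [CommRing R]

/-- `Tor_i^R(M, N) = 0`. -/
noncomputable def TorVanish (M N : Type) [AddCommGroup M] [Module R M]
    [AddCommGroup N] [Module R N] (i : ℕ) : Prop :=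
  Subsingleton (((Tor (ModuleCat R) i).obj (ModuleCat.of R M)).obj (ModuleCat.of R N))

/-- `Ext_R^i(M, N) = 0`. -/
noncomputable def ExtVanish (M N : Type) [AddCommGroup M] [Module R M]
    [AddCommGroup N] [Module R N] (i : ℕ) : Prop :=
  Subsingleton (((Ext R (ModuleCat R) i).obj (Opposite.op (ModuleCat.of R M))).obj
    (ModuleCat.of R N))

/-- `pd_R M < n`, expressed by the standard characterization
`Ext_R^i(M, -) = 0` for all `i ≥ n`. -/
def ProjDimLT (M : Type) [AddCommGroup M] [Module R M] (n : ℕ) : Prop :=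
  ∀ (N : ModuleCat R) (i : ℕ), n ≤ i → ExtVanish R M N i

/-- `pd_R M < ∞`. -/
def ProjDimFinite (M : Type) [AddCommGroup M] [Module R M] : Prop :=
  ∃ n, ProjDimLT R M n

/-- `id_R M < n`, expressed by the standard characterization
`Ext_R^i(-, M) = 0` for all `i ≥ n`. -/
def InjDimLT (M : Type) [AddCommGroup M] [Module R M] (n : ℕ) : Prop :=
  ∀ (N : ModuleCat R) (i : ℕ), n ≤ i → ExtVanish R N M i

/-- `id_R M < ∞`. -/
def InjDimFinite (M : Type) [AddCommGroup M] [Module R M] : Prop :=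
  ∃ n, InjDimLT R M n

/-- `M` is a Tor-rigid `R`-module. -/
def TorRigid (M : Type) [AddCommGroup M] [Module R M] : Prop :=
  ∀ (N : ModuleCat R), Module.Finite R N → ∀ n : ℕ, 1 ≤ n → TorVanish R M N n →
    ∀ i : ℕ, n ≤ i → TorVanish R M N i

variable [IsLocalRing R]

/-- The depth of `M`: the supremum of lengths of `M`-regular sequences contained in
the maximal ideal. -/
noncomputable def depth (M : Type) [AddCommGroup M] [Module R M] : ℕ∞ :=
  sSup {n : ℕ∞ | ∃ rs : List R, (∀ x ∈ rs, x ∈ maximalIdeal R) ∧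
    RingTheory.Sequence.IsRegular M rs ∧ (rs.length : ℕ∞) = n}

/-- The dimension of a module, i.e. the Krull dimension of `R ⧸ ann M`. -/
noncomputable def moduleDim (M : Type) [AddCommGroup M] [Module R M] : WithBot ℕ∞ :=
  ringKrullDim (R ⧸ Module.annihilator R M)

/-- `M` is an Ulrich `R`-module of dimension `s` : `M` is nonzero, Cohen–Macaulay of
dimension `s`, and there is an `M`-regular sequence `x₁, …, x_s` in the maximal ideal
with `mM = (x₁, …, x_s)M`. -/
def IsUlrich (M : Type) [AddCommGroup M] [Module R M] (s : ℕ) : Prop :=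
  Nontrivial M ∧ moduleDim R M = (s : ℕ∞) ∧ depth R M = (s : ℕ∞) ∧
  ∃ rs : List R, rs.length = s ∧ (∀ x ∈ rs, x ∈ maximalIdeal R) ∧
    RingTheory.Sequence.IsRegular M rs ∧
    (maximalIdeal R) • (⊤ : Submodule R M) = (Ideal.ofList rs) • ⊤

/-- `R` is a regular local ring: the maximal ideal is generated by `dim R` elements. -/
def IsRegularLocal : Prop :=
  ∃ s : Finset R, Ideal.span (s : Set R) = maximalIdeal R ∧
    (s.card : WithBot ℕ∞) = ringKrullDim R

/-- `R` (of dimension `d`) has minimal multiplicity: there is an `R`-regular sequence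
`x₁, …, x_d` in the maximal ideal `m` with `m² = (x₁, …, x_d)m`. -/
def HasMinimalMultiplicity (d : ℕ) : Prop :=
  ∃ rs : List R, rs.length = d ∧ (∀ x ∈ rs, x ∈ maximalIdeal R) ∧
    RingTheory.Sequence.IsWeaklyRegular R rs ∧
    maximalIdeal R ^ 2 = Ideal.ofList rs * maximalIdeal R

/-- The `n`-th Betti number of `M` over the local ring `R`, i.e. the dimension over the
residue field `k = R ⧸ m` of `Tor_n^R(M, k)` (which is an `m`-torsion module, so we take
the dimension of its reduction mod `m`). -/
noncomputable def betti (M : Type) [AddCommGroup M] [Module R M] (n : ℕ) : ℕ :=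
  Module.finrank (R ⧸ maximalIdeal R)
    ((((Tor (ModuleCat R) n).obj (ModuleCat.of R M)).obj
        (ModuleCat.of R (R ⧸ maximalIdeal R))) ⧸
      (maximalIdeal R • (⊤ : Submodule R
        (((Tor (ModuleCat R) n).obj (ModuleCat.of R M)).obj
          (ModuleCat.of R (R ⧸ maximalIdeal R))))))

end Prelim

/-!
Write `N = F ⧸ K` with `F` finite free. The vanishing of `Tor₁(N, R ⧸ I)` makes `N ⊗ I → N`
injective, and hence gives `K ∩ IF = IK`, where `I = (f₁, …, f_c)`. This condition descends from
`(J, f)` to `J` when `f` is regular on `F ⧸ JF`: an element of `K ∩ JF` has the form `a + f k` with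
`a ∈ JK` and `k ∈ K`, regularity puts `k` back in `K ∩ JF`, and Nakayama's lemma removes the term
`f k`. The same decomposition shows that `f` is regular on `N ⧸ JN`, so one peels off
`f_c, …, f₁` in turn.
-/

section TorVanishing

variable {R : Type*} [CommRing R]
variable (N : Type*) [AddCommGroup N] [Module R N]
variable {P₀ P₁ P₂ X : Type*} [AddCommGroup P₀] [Module R P₀] [AddCommGroup P₁] [Module R P₁]
variable [AddCommGroup P₂] [Module R P₂] [AddCommGroup X] [Module R X]

lemma lTensor_ker_subtype_injective_of_exact {d₂ : P₂ →ₗ[R] P₁} {d₁ : P₁ →ₗ[R] P₀}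
    {e : P₀ →ₗ[R] X} (hd : d₁ ∘ₗ d₂ = 0) (hd₁ : Function.Exact d₁ e)
    (hN : Function.Exact (d₂.lTensor N) (d₁.lTensor N)) :
    Function.Injective ((LinearMap.ker e).subtype.lTensor N) := by
  let δ : P₁ →ₗ[R] LinearMap.ker e := d₁.codRestrict _ hd₁.apply_apply_eq_zero
  have hδ : (LinearMap.ker e).subtype ∘ₗ δ = d₁ := LinearMap.subtype_comp_codRestrict ..
  have hδ_surj : Function.Surjective δ := by
    rintro ⟨x, hx⟩
    obtain ⟨y, rfl⟩ := (hd₁ x).1 hx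
    exact ⟨y, rfl⟩
  have hδd : δ ∘ₗ d₂ = 0 := by
    rw [← LinearMap.cancel_left (LinearMap.ker e).injective_subtype, ← LinearMap.comp_assoc, hδ,
      hd, LinearMap.comp_zero]
  rw [injective_iff_map_eq_zero]
  intro t ht
  obtain ⟨w, rfl⟩ := LinearMap.lTensor_surjective N hδ_surj t
  rw [← LinearMap.lTensor_comp_apply, hδ] at ht
  obtain ⟨v, rfl⟩ := (hN w).1 ht
  rw [← LinearMap.lTensor_comp_apply, hδd, LinearMap.lTensor_zero, LinearMap.zero_apply]

/- For lifts `h : Q → P` and `k : P → Q` over `X`, the map `id - k ∘ h` sends all of `Q` into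
`ker q`, so `N ⊗ (id - k ∘ h)` kills every element of `N ⊗ ker q` that dies in `N ⊗ Q`. -/
lemma lTensor_ker_subtype_injective_of_projective {P Q : Type*} [AddCommGroup P] [Module R P]
    [Module.Projective R P] [AddCommGroup Q] [Module R Q] [Module.Projective R Q]
    {p : P →ₗ[R] X} {q : Q →ₗ[R] X} (hp : Function.Surjective p) (hq : Function.Surjective q)
    (hinj : Function.Injective ((LinearMap.ker p).subtype.lTensor N)) :
    Function.Injective ((LinearMap.ker q).subtype.lTensor N) := by
  obtain ⟨h, hh⟩ := Module.projective_lifting_property p q hp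
  obtain ⟨k, hk⟩ := Module.projective_lifting_property q p hq
  have hh' (x : Q) : p (h x) = q x := LinearMap.congr_fun hh x
  have hk' (x : P) : q (k x) = p x := LinearMap.congr_fun hk x
  let hKer : LinearMap.ker q →ₗ[R] LinearMap.ker p := h.restrict fun x hx ↦ by
    rwa [LinearMap.mem_ker, hh']
  let kKer : LinearMap.ker p →ₗ[R] LinearMap.ker q := k.restrict fun x hx ↦ by
    rwa [LinearMap.mem_ker, hk']
  let φ : Q →ₗ[R] LinearMap.ker q := (LinearMap.id - k ∘ₗ h).codRestrict _ fun x ↦ by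
    simp [hh', hk']
  have hcomm : (LinearMap.ker p).subtype ∘ₗ hKer = h ∘ₗ (LinearMap.ker q).subtype := rfl
  have hid : LinearMap.id = kKer ∘ₗ hKer + φ ∘ₗ (LinearMap.ker q).subtype := by
    ext x
    simp [φ, kKer, hKer]
  rw [injective_iff_map_eq_zero]
  intro t ht
  have hKer_t : hKer.lTensor N t = 0 := by
    apply hinj
    rw [← LinearMap.lTensor_comp_apply, hcomm, LinearMap.lTensor_comp_apply, ht, map_zero, map_zero]
  calc t = (LinearMap.id : LinearMap.ker q →ₗ[R] _).lTensor N t := by simp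
    _ = kKer.lTensor N (hKer.lTensor N t)
        + φ.lTensor N ((LinearMap.ker q).subtype.lTensor N t) := by
      rw [hid, LinearMap.lTensor_add, LinearMap.add_apply, LinearMap.lTensor_comp_apply,
        LinearMap.lTensor_comp_apply]
    _ = 0 := by rw [hKer_t, ht, map_zero, map_zero, add_zero]

end TorVanishing

lemma lTensor_ker_subtype_injective_of_torVanish_one {R : Type} [CommRing R]
    {N X Q : Type} [AddCommGroup N] [Module R N] [AddCommGroup X] [Module R X]
    [AddCommGroup Q] [Module R Q] [Module.Projective R Q] (hTor : TorVanish R N X 1)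
    {q : Q →ₗ[R] X} (hq : Function.Surjective q) :
    Function.Injective ((LinearMap.ker q).subtype.lTensor N) := by
  let P : ProjectiveResolution (ModuleCat.of R X) := ProjectiveResolution.of _
  let G := (MonoidalCategory.tensoringLeft (ModuleCat R)).obj (ModuleCat.of R N)
  have hzero : Limits.IsZero ((G.leftDerived 1).obj (ModuleCat.of R X)) :=
    @ModuleCat.isZero_of_subsingleton _ _ _ hTor
  have hexact : ((G.mapHomologicalComplex _).obj P.complex).ExactAt 1 :=
    (HomologicalComplex.exactAt_iff_isZero_homology _ _).2
      (hzero.of_iso (P.isoLeftDerivedObj G 1).symm)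
  rw [HomologicalComplex.exactAt_iff' _ 2 1 0 (by simp) (by simp),
    ShortComplex.ShortExact.moduleCat_exact_iff_function_exact] at hexact
  have hexact₀ : Function.Exact (P.complex.d 1 0).hom (P.π.f 0).hom :=
    (ShortComplex.ShortExact.moduleCat_exact_iff_function_exact _).1 P.exact₀
  have hπ : Function.Surjective (P.π.f 0).hom := (ModuleCat.epi_iff_surjective _).1 inferInstance
  have hd : (P.complex.d 1 0).hom ∘ₗ (P.complex.d 2 1).hom = 0 := by
    rw [← ModuleCat.hom_comp, P.complex.d_comp_d, ModuleCat.hom_zero]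
  have : Module.Projective R (P.complex.X 0) :=
    (IsProjective.iff_projective _).2 (P.projective 0)
  exact lTensor_ker_subtype_injective_of_projective N hπ hq
    (lTensor_ker_subtype_injective_of_exact N hd hexact₀ hexact)

lemma rTensor_ideal_subtype_injective_of_torVanish_one {R : Type} [CommRing R] {I : Ideal R}
    {N : Type} [AddCommGroup N] [Module R N] (hTor : TorVanish R N (R ⧸ I) 1) :
    Function.Injective (I.subtype.rTensor N) := by
  rw [← LinearMap.lTensor_inj_iff_rTensor_inj]
  exact I.ker_mkQ ▸ lTensor_ker_subtype_injective_of_torVanish_one hTor I.mkQ_surjective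

section Purity

open scoped TensorProduct

variable {R : Type*} [CommRing R] {M : Type*} [AddCommGroup M] [Module R M]

/-- A submodule `K` of `M` is pure at the ideal `I` if `K ∩ IM = IK`, i.e. if `K ⧸ IK → M ⧸ IM` is
injective. For flat `M` this says `Tor₁(M ⧸ K, R ⧸ I) = 0`. Only the nontrivial inclusion is
recorded. -/
def IsPureAt (I : Ideal R) (K : Submodule R M) : Prop :=
  K ⊓ I • ⊤ ≤ I • K

lemma isPureAt_ker_of_rTensor_injective {N : Type*} [AddCommGroup N] [Module R N] {I : Ideal R}
    {p : M →ₗ[R] N} (hp : Function.Surjective p)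
    (hinj : Function.Injective (I.subtype.rTensor N)) : IsPureAt I (LinearMap.ker p) := by
  have hcomm (t : I ⊗[R] M) :
      TensorProduct.lid R N (I.subtype.rTensor N (p.lTensor I t)) =
        p (TensorProduct.lid R M (I.subtype.rTensor M t)) := by
    induction t <;> simp_all
  have hmem (u : I ⊗[R] LinearMap.ker p) : TensorProduct.lid R M
      (I.subtype.rTensor M ((LinearMap.ker p).subtype.lTensor I u)) ∈ I • LinearMap.ker p := by
    induction u with
    | zero => simp
    | tmul a k => exact Submodule.smul_mem_smul a.2 k.2
    | add u v hu hv => simpa only [map_add] using add_mem hu hv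
  rintro x ⟨hxK, hxI⟩
  rw [← I.subtype_rTensor_range M] at hxI
  obtain ⟨t, rfl⟩ := hxI
  have ht : p.lTensor I t = 0 := by
    refine hinj ((TensorProduct.lid R N).injective ?_)
    rw [hcomm, map_zero, map_zero]
    exact hxK
  obtain ⟨u, rfl⟩ := (lTensor_exact I (LinearMap.exact_subtype_ker_map p) hp t).1 ht
  exact hmem u

namespace IsPureAt

variable {I : Ideal R} {K : Submodule R M} {f : R}

lemma exists_add_smul_eq (h : IsPureAt (I ⊔ Ideal.span {f}) K) {x : M} (hxK : x ∈ K)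
    (hx : x ∈ (I ⊔ Ideal.span {f}) • (⊤ : Submodule R M)) :
    ∃ a ∈ I • K, ∃ k ∈ K, a + f • k = x := by
  have hx' := h ⟨hxK, hx⟩
  rw [Submodule.sup_smul, Submodule.ideal_span_singleton_smul] at hx'
  obtain ⟨a, ha, b, hb, rfl⟩ := Submodule.mem_sup.1 hx'
  obtain ⟨k, hk, rfl⟩ := (Submodule.mem_smul_pointwise_iff_exists _ _ _).1 hb
  exact ⟨a, ha, k, hk, rfl⟩

lemma of_sup_span_singleton [IsNoetherian R M] (hf : f ∈ Ideal.jacobson (⊥ : Ideal R))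
    (hreg : IsSMulRegular (M ⧸ (I • ⊤ : Submodule R M)) f)
    (h : IsPureAt (I ⊔ Ideal.span {f}) K) : IsPureAt I K := by
  have hle : K ⊓ I • ⊤ ≤ I • K ⊔ Ideal.span {f} • (K ⊓ I • ⊤) := by
    rintro x ⟨hxK, hxI⟩
    obtain ⟨a, ha, k, hk, rfl⟩ :=
      h.exists_add_smul_eq hxK (Submodule.smul_mono_left le_sup_left hxI)
    have hkI : k ∈ I • (⊤ : Submodule R M) :=
      mem_of_isSMulRegular_quotient_of_smul_mem hreg <|
        (Submodule.add_mem_iff_right _ (Submodule.smul_mono le_rfl le_top ha)).1 hxI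
    exact Submodule.add_mem_sup ha
      (Submodule.smul_mem_smul (Ideal.mem_span_singleton_self f) ⟨hk, hkI⟩)
  exact Submodule.le_of_le_smul_of_le_jacobson_bot (IsNoetherian.noetherian _)
    ((Ideal.span_singleton_le_iff_mem _).2 hf) hle

lemma isSMulRegular_quotient_sup (hreg : IsSMulRegular (M ⧸ (I • ⊤ : Submodule R M)) f)
    (h : IsPureAt (I ⊔ Ideal.span {f}) K) : IsSMulRegular (M ⧸ (K ⊔ I • ⊤)) f := by
  rw [isSMulRegular_quotient_iff_mem_of_smul_mem]
  intro x hx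
  obtain ⟨k, hk, z, hz, hkz⟩ := Submodule.mem_sup.1 hx
  have hk_mem : k ∈ (I ⊔ Ideal.span {f}) • (⊤ : Submodule R M) := by
    rw [eq_sub_of_add_eq hkz]
    exact sub_mem (Submodule.smul_mem_smul (Ideal.mem_sup_right (Ideal.mem_span_singleton_self f))
      trivial) (Submodule.smul_mono_left le_sup_left hz)
  obtain ⟨a, ha, k', hk', rfl⟩ := h.exists_add_smul_eq hk hk_mem
  have hsub : x - k' ∈ I • (⊤ : Submodule R M) := by
    refine mem_of_isSMulRegular_quotient_of_smul_mem hreg ?_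
    rw [smul_sub, ← hkz, show a + f • k' + z - f • k' = a + z by abel]
    exact add_mem (Submodule.smul_mono le_rfl le_top ha) hz
  simpa using Submodule.add_mem_sup hk' hsub

lemma isSMulRegular_quotient_smul_top (hreg : IsSMulRegular (M ⧸ (I • ⊤ : Submodule R M)) f)
    (h : IsPureAt (I ⊔ Ideal.span {f}) K) :
    IsSMulRegular ((M ⧸ K) ⧸ (I • ⊤ : Submodule R (M ⧸ K))) f := by
  have htop : (I • ⊤ : Submodule R (M ⧸ K)) = (I • ⊤ : Submodule R M).map K.mkQ := by
    rw [Submodule.map_smul'', Submodule.map_top, Submodule.range_mkQ]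
  rw [htop, (Submodule.quotientQuotientEquivQuotientSup K (I • ⊤)).isSMulRegular_congr f]
  exact h.isSMulRegular_quotient_sup hreg

lemma isWeaklyRegular_quotient [IsNoetherian R M] {fs : List R}
    (hfs : ∀ x ∈ fs, x ∈ Ideal.jacobson (⊥ : Ideal R))
    (hreg : RingTheory.Sequence.IsWeaklyRegular M fs) (h : IsPureAt (Ideal.ofList fs) K) :
    RingTheory.Sequence.IsWeaklyRegular (M ⧸ K) fs := by
  induction fs using List.reverseRecOn with
  | nil => exact .nil R _
  | append_singleton gs f ih =>
    rw [RingTheory.Sequence.isWeaklyRegular_append_iff,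
      RingTheory.Sequence.isWeaklyRegular_singleton_iff] at hreg ⊢
    rw [Ideal.ofList_append, Ideal.ofList_singleton] at h
    simp only [List.mem_append, List.mem_singleton, or_imp, forall_and, forall_eq] at hfs
    exact ⟨ih hfs.1 hreg.1 (h.of_sup_span_singleton hfs.2 hreg.2),
      h.isSMulRegular_quotient_smul_top hreg.2⟩

end IsPureAt

lemma isWeaklyRegular_of_flat [Module.Flat R M] {fs : List R}
    (hfs : RingTheory.Sequence.IsWeaklyRegular R fs) :
    RingTheory.Sequence.IsWeaklyRegular M fs :=
  ((TensorProduct.rid R M).isWeaklyRegular_congr fs).1 hfs.isWeaklyRegular_lTensor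

end Purity

theorem statement16_general {R : Type} [CommRing R] [IsNoetherianRing R] {fs : List R}
    (hfs : ∀ x ∈ fs, x ∈ Ideal.jacobson (⊥ : Ideal R))
    (hreg : RingTheory.Sequence.IsWeaklyRegular R fs)
    {N : Type} [AddCommGroup N] [Module R N] [Module.Finite R N]
    (hTor : TorVanish R N (R ⧸ Ideal.ofList fs) 1) :
    RingTheory.Sequence.IsWeaklyRegular N fs := by
  obtain ⟨n, p, hp⟩ := Module.Finite.exists_fin' R N
  have hpure : IsPureAt (Ideal.ofList fs) (LinearMap.ker p) :=
    isPureAt_ker_of_rTensor_injective hp (rTensor_ideal_subtype_injective_of_torVanish_one hTor)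
  rw [← (p.quotKerEquivOfSurjective hp).isWeaklyRegular_congr fs]
  exact hpure.isWeaklyRegular_quotient hfs (isWeaklyRegular_of_flat hreg)

theorem statement16 (R : Type) [CommRing R] [IsNoetherianRing R] [IsLocalRing R]
    (fs : List R) (hmem : ∀ x ∈ fs, x ∈ maximalIdeal R)
    (hreg : RingTheory.Sequence.IsWeaklyRegular R fs)
    (N : Type) [AddCommGroup N] [Module R N] [Module.Finite R N]
    (hTor : TorVanish R N (R ⧸ Ideal.ofList fs) 1) :
    RingTheory.Sequence.IsWeaklyRegular N fs :=
  statement16_general (by rwa [IsLocalRing.jacobson_eq_maximalIdeal _ bot_ne_top]) hreg hTor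
end

section
/- Let (R, m, k) be a Cohen–Macaulay commutative Noetherian local ring of dimension d with minimal multiplicity, i.e., there exists an R-regular sequence x₁, …, x_d ∈ m with m² = (x₁, …, x_d)m. Let f₁, …, f_c ∈ m be an R-regular sequence and set S = R/(f₁, …, f_c). Let M and N be finitely generated S-modules and set i₀ = dim(S) − depth_S(M). Then the following are equivalent: (1) Tor_i^S(M, N) = 0 for some d+c+1 consecutive values of i with all these values ≥ i₀ + 2; (2) Tor_i^S(M, N) = 0 for all i ≥ i₀ + 1. Moreover, if these hold, then either pd_R M < ∞ or pd_R N < ∞. -/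
open CategoryTheory IsLocalRing

open TensorProduct Function RingTheory.Sequence
open scoped Pointwise

universe u

/-!
Change of rings along `R → R ⧸ (f)`, one `fⱼ` at a time, turns the vanishing of `Tor^S(M, N)` on
`d + c + 1` consecutive indices into the vanishing of `Tor^R(M, N)` on `d + 1` consecutive ones.
Replace `M` by a syzygy `Ω` high enough for the maximal `R`-sequence `x` with `m² = (x) m` to be
`Ω`-regular, and let `K ⊆ m F` be the first syzygy of `Ω` in a minimal free cover `F`. Then
`m K ⊆ m² F ⊆ (x) F`, so `K / x K` is a vector space over the residue field `k`. Either `K = 0` and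
`pd M < ∞`, or `k` is a direct summand of `K / x K`, and then the vanishing of `Tor^R(Ω, N)` forces
`Tor^R(k, N)` to vanish in some degree, so that `pd N < ∞`. In the second case the vanishing of
`Tor^R(Ω, N)` in all positive degrees follows by looking at an associated prime of the highest
nonzero `Tor` module. Finally the change-of-rings sequence carries the vanishing back to `S`.
-/

section TorOne

variable (R : Type u) [CommRing R]

/-- The canonical free cover of `Y`, on the basis of all elements of `Y`. -/
noncomputable abbrev freeCover (Y : Type u) [AddCommGroup Y] [Module R Y] :
    (Y →₀ R) →ₗ[R] Y :=
  Finsupp.linearCombination R id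

/-- The first syzygy of `Y` with respect to its canonical free cover. -/
noncomputable abbrev syzygy (Y : Type u) [AddCommGroup Y] [Module R Y] : Submodule R (Y →₀ R) :=
  LinearMap.ker (freeCover R Y)

/-- `Tor₁(X, Y)`, computed from the canonical free cover of `Y`. -/
noncomputable def torOne (X Y : Type u) [AddCommGroup X] [Module R X] [AddCommGroup Y]
    [Module R Y] : Submodule R (X ⊗[R] syzygy R Y) :=
  LinearMap.ker (LinearMap.lTensor X (syzygy R Y).subtype)

variable {R}
variable {X X' X'' Y : Type u} [AddCommGroup X] [Module R X] [AddCommGroup X'] [Module R X']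
  [AddCommGroup X''] [Module R X''] [AddCommGroup Y] [Module R Y]

/-- The sequence `0 → X' → X → X'' → 0` is exact. -/
structure IsShortExact (f : X' →ₗ[R] X) (g : X →ₗ[R] X'') : Prop where
  injective : Injective f
  exact : Exact f g
  surjective : Surjective g

lemma isShortExact_ker_subtype {g : X →ₗ[R] X''} (hg : Surjective g) :
    IsShortExact (LinearMap.ker g).subtype g :=
  ⟨Submodule.injective_subtype _, LinearMap.exact_subtype_ker_map _, hg⟩

lemma isShortExact_subtype_mkQ (p : Submodule R X) : IsShortExact p.subtype p.mkQ :=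
  ⟨p.injective_subtype, LinearMap.exact_subtype_mkQ p, p.mkQ_surjective⟩

variable (R Y) in
lemma isShortExact_freeCover :
    IsShortExact (X' := syzygy R Y) (X := Y →₀ R) (syzygy R Y).subtype (freeCover R Y) :=
  isShortExact_ker_subtype fun y => ⟨Finsupp.single y 1, by simp [freeCover]⟩

lemma rTensor_comp_lTensor_comm {A A' B B' : Type u} [AddCommMonoid A] [Module R A]
    [AddCommMonoid A'] [Module R A'] [AddCommMonoid B] [Module R B] [AddCommMonoid B']
    [Module R B'] (f : A →ₗ[R] A') (g : B →ₗ[R] B') :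
    f.rTensor B' ∘ₗ g.lTensor A = g.lTensor A' ∘ₗ f.rTensor B := by
  rw [LinearMap.lTensor_comp_rTensor, LinearMap.rTensor_comp_lTensor]

lemma subsingleton_of_exact {f : X' →ₗ[R] X} {g : X →ₗ[R] X''} (h : Exact f g)
    [Subsingleton X'] [Subsingleton X''] : Subsingleton X :=
  subsingleton_of_forall_eq 0 fun x => by
    obtain ⟨x', rfl⟩ := (h x).1 (Subsingleton.elim _ _)
    rw [Subsingleton.elim x' 0, map_zero]

lemma injective_of_exact {f : X' →ₗ[R] X} {g : X →ₗ[R] X''} (h : Exact f g)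
    [Subsingleton X'] : Injective g := by
  rw [injective_iff_map_eq_zero]
  intro x hx
  obtain ⟨x', rfl⟩ := (h x).1 hx
  rw [Subsingleton.elim x' 0, map_zero]

namespace torOne

lemma mem_of_rTensor_mem {f : X' →ₗ[R] X} (hf : Injective f) {t : X' ⊗[R] syzygy R Y}
    (ht : f.rTensor (syzygy R Y) t ∈ torOne R X Y) : t ∈ torOne R X' Y := by
  rw [torOne, LinearMap.mem_ker] at ht ⊢
  apply Module.Flat.rTensor_preserves_injective_linearMap (M := Y →₀ R) f hf
  rw [map_zero, ← ht]
  exact LinearMap.congr_fun (rTensor_comp_lTensor_comm f _) t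

/-- The map `Tor₁(X, Y) → Tor₁(X', Y)` induced by `f : X → X'`. -/
noncomputable def map (Y : Type u) [AddCommGroup Y] [Module R Y] (f : X →ₗ[R] X') :
    torOne R X Y →ₗ[R] torOne R X' Y :=
  (f.rTensor (syzygy R Y)).restrict fun t ht => by
    simp only [torOne, LinearMap.mem_ker] at ht ⊢
    exact (LinearMap.congr_fun (rTensor_comp_lTensor_comm f _) t).symm.trans <| by
      rw [LinearMap.comp_apply, ht, map_zero]

@[simp] lemma coe_map (f : X →ₗ[R] X') (t : torOne R X Y) :
    (map Y f t : X' ⊗[R] syzygy R Y) = f.rTensor (syzygy R Y) t := rfl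

lemma map_smul_id (r : R) (t : torOne R X Y) :
    map Y (r • (LinearMap.id : X →ₗ[R] X)) t = r • t := by
  ext
  simp [LinearMap.rTensor_smul]

lemma map_id (t : torOne R X Y) : map Y (LinearMap.id : X →ₗ[R] X) t = t := by
  ext
  simp

lemma map_map (f : X →ₗ[R] X') (g : X' →ₗ[R] X'') (t : torOne R X Y) :
    map Y g (map Y f t) = map Y (g ∘ₗ f) t := by
  ext
  simp [LinearMap.rTensor_comp_apply]

lemma subsingleton_of_flat [Module.Flat R X] : Subsingleton (torOne R X Y) := by
  rw [torOne, Submodule.subsingleton_iff_eq_bot, LinearMap.ker_eq_bot]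
  exact Module.Flat.lTensor_preserves_injective_linearMap _ (syzygy R Y).injective_subtype

variable {f : X' →ₗ[R] X} {g : X →ₗ[R] X''}

lemma exact_map (h : IsShortExact f g) : Exact (map Y f) (map Y g) := by
  intro t
  constructor
  · intro ht
    have ht' : g.rTensor (syzygy R Y) t = 0 := congrArg Subtype.val ht
    obtain ⟨s, hs⟩ := (rTensor_exact (syzygy R Y) h.exact h.surjective _).1 ht'
    exact ⟨⟨s, mem_of_rTensor_mem h.injective (hs ▸ t.2)⟩, Subtype.ext hs⟩
  · rintro ⟨s, rfl⟩
    rw [map_map, h.exact.linearMap_comp_eq_zero]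
    ext
    simp

lemma exists_connecting_tensor (Y : Type u) [AddCommGroup Y] [Module R Y]
    (h : IsShortExact f g) : ∃ δ : torOne R X'' Y →ₗ[R] X' ⊗[R] Y,
      Exact (map Y g) δ ∧ Exact δ (f.rTensor Y) := by
  have hY := isShortExact_freeCover R Y
  have exact_rTensor (Z : Type u) [AddCommGroup Z] [Module R Z] :=
    rTensor_exact Z h.exact h.surjective
  have exact_lTensor (Z : Type u) [AddCommGroup Z] [Module R Z] :=
    lTensor_exact (M := syzygy R Y) (N := Y →₀ R) Z hY.exact hY.surjective
  refine ⟨SnakeLemma.δ' ((syzygy R Y).subtype.lTensor X') ((syzygy R Y).subtype.lTensor X)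
    ((syzygy R Y).subtype.lTensor X'') _ _ (exact_rTensor (syzygy R Y)) _ _
    (exact_rTensor (Y →₀ R))
    (rTensor_comp_lTensor_comm _ _) (rTensor_comp_lTensor_comm _ _)
    (torOne R X'' Y).subtype (LinearMap.exact_subtype_ker_map _)
    ((freeCover R Y).lTensor X') (exact_lTensor X') (LinearMap.rTensor_surjective _ h.surjective)
    (Module.Flat.rTensor_preserves_injective_linearMap f h.injective), ?_, ?_⟩
  · apply SnakeLemma.exact_δ'_right (ι₂ := (torOne R X Y).subtype)
    · exact LinearMap.exact_subtype_ker_map _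
    · rfl
    · exact Submodule.injective_subtype _
  · apply SnakeLemma.exact_δ'_left (π₂ := (freeCover R Y).lTensor X)
    · exact exact_lTensor X
    · exact rTensor_comp_lTensor_comm f (freeCover R Y)
    · exact LinearMap.lTensor_surjective _ hY.surjective

lemma exists_connecting (Y : Type u) [AddCommGroup Y] [Module R Y] (h : IsShortExact f g) :
    ∃ δ : torOne R X'' (syzygy R Y) →ₗ[R] torOne R X' Y,
      Exact (map (syzygy R Y) g) δ ∧ Exact δ (map Y f) := by
  obtain ⟨δ, hgδ, hδf⟩ := exists_connecting_tensor (syzygy R Y) h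
  have mem (t) : δ t ∈ torOne R X' Y :=
    mem_of_rTensor_mem h.injective ((hδf.apply_apply_eq_zero t).symm ▸ zero_mem _)
  refine ⟨δ.codRestrict _ mem, fun t => ?_, fun t => ?_⟩
  · rw [← hgδ t]
    exact ⟨congrArg Subtype.val, fun ht => Subtype.ext ht⟩
  · have := hδf t.1
    exact ⟨fun ht => (this.1 (congrArg Subtype.val ht)).imp fun _ hs => Subtype.ext hs,
      fun ⟨s, hs⟩ => Subtype.ext (this.2 ⟨s, congrArg Subtype.val hs⟩)⟩

end torOne

end TorOne

section TorSucc

variable {R : Type u} [CommRing R]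
variable {X X' X'' Y Y' : Type u} [AddCommGroup X] [Module R X] [AddCommGroup X'] [Module R X']
  [AddCommGroup X''] [Module R X''] [AddCommGroup Y] [Module R Y] [AddCommGroup Y'] [Module R Y']

variable (R) in
/-- The `n`-th syzygy of `Y` in its canonical free resolution. -/
noncomputable def iterSyzygy : ℕ → ModuleCat.{u} R → ModuleCat.{u} R
  | 0, Y => Y
  | n + 1, Y => iterSyzygy n (ModuleCat.of R (syzygy R Y))

variable (R) in
/-- `Tor_{n+1}(X, Y)`, computed as `Tor₁` of `X` and the `n`-th syzygy of `Y`. The derived functor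
`CategoryTheory.Tor` comes without long exact sequences or symmetry; for this elementary model
both follow from the snake lemma, and `torVanish_succ_iff` compares the two. -/
noncomputable abbrev torSucc (n : ℕ) (X Y : Type u) [AddCommGroup X] [Module R X]
    [AddCommGroup Y] [Module R Y] :
    Submodule R (X ⊗[R] syzygy R (iterSyzygy R n (ModuleCat.of R Y))) :=
  torOne R X (iterSyzygy R n (ModuleCat.of R Y))

namespace torSucc

/-- The map `Tor_{n+1}(X, Y) → Tor_{n+1}(X', Y)` induced by `f : X → X'`. -/
noncomputable abbrev map (n : ℕ) (Y : Type u) [AddCommGroup Y] [Module R Y] (f : X →ₗ[R] X') :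
    torSucc R n X Y →ₗ[R] torSucc R n X' Y :=
  torOne.map (iterSyzygy R n (ModuleCat.of R Y)) f

variable {f : X' →ₗ[R] X} {g : X →ₗ[R] X''}

lemma exact_map (n : ℕ) (Y : Type u) [AddCommGroup Y] [Module R Y] (h : IsShortExact f g) :
    Exact (map n Y f) (map n Y g) :=
  torOne.exact_map h

lemma exists_connecting (n : ℕ) (Y : Type u) [AddCommGroup Y] [Module R Y]
    (h : IsShortExact f g) : ∃ δ : torSucc R (n + 1) X'' Y →ₗ[R] torSucc R n X' Y,
      Exact (map (n + 1) Y g) δ ∧ Exact δ (map n Y f) := by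
  induction n generalizing Y with
  | zero => exact torOne.exists_connecting Y h
  | succ _ ih => exact ih (syzygy R Y)

lemma nonempty_equiv_of_isShortExact (n : ℕ) (Y : Type u) [AddCommGroup Y] [Module R Y]
    (h : IsShortExact f g) [Module.Flat R X] :
    Nonempty (torSucc R (n + 1) X'' Y ≃ₗ[R] torSucc R n X' Y) := by
  obtain ⟨δ, hgδ, hδf⟩ := exists_connecting n Y h
  have : Subsingleton (torSucc R (n + 1) X Y) := torOne.subsingleton_of_flat
  have : Subsingleton (torSucc R n X Y) := torOne.subsingleton_of_flat
  exact ⟨.ofBijective δ ⟨injective_of_exact hgδ, fun t => (hδf t).1 (Subsingleton.elim _ _)⟩⟩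

lemma nonempty_equiv_ker_of_isShortExact (Y : Type u) [AddCommGroup Y] [Module R Y]
    (h : IsShortExact f g) [Module.Flat R X] :
    Nonempty (torSucc R 0 X'' Y ≃ₗ[R] LinearMap.ker (f.rTensor Y)) := by
  obtain ⟨δ, hgδ, hδf⟩ := torOne.exists_connecting_tensor Y h
  have : Subsingleton (torOne R X Y) := torOne.subsingleton_of_flat
  rw [hδf.linearMap_ker_eq]
  exact ⟨.ofInjective δ (injective_of_exact hgδ)⟩

lemma nonempty_equiv_syzygy (n : ℕ) (X Y : Type u) [AddCommGroup X] [Module R X]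
    [AddCommGroup Y] [Module R Y] :
    Nonempty (torSucc R (n + 1) X Y ≃ₗ[R] torSucc R n (syzygy R X) Y) :=
  nonempty_equiv_of_isShortExact n Y (isShortExact_freeCover R X)

/-- The map of `torSucc` induced by an isomorphism of the first argument. -/
noncomputable def congrLeft (n : ℕ) (Y : Type u) [AddCommGroup Y] [Module R Y] (e : X ≃ₗ[R] X') :
    torSucc R n X Y ≃ₗ[R] torSucc R n X' Y :=
  .ofLinearMap (map n Y e) (map n Y e.symm)
    (by ext1 t; simp [torOne.map_map, torOne.map_id])
    (by ext1 t; simp [torOne.map_map, torOne.map_id])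

lemma nonempty_comm_zero (X Y : Type u) [AddCommGroup X] [Module R X] [AddCommGroup Y]
    [Module R Y] : Nonempty (torSucc R 0 X Y ≃ₗ[R] torSucc R 0 Y X) := by
  obtain ⟨e⟩ := nonempty_equiv_ker_of_isShortExact Y (isShortExact_freeCover R X)
  refine ⟨e.trans <| .ofSubmodules (TensorProduct.comm R (syzygy R X) Y) _ _ ?_⟩
  change _ = LinearMap.ker ((syzygy R X).subtype.lTensor Y)
  rw [Submodule.map_equiv_eq_comap_symm]
  ext t
  rw [Submodule.mem_comap, LinearMap.mem_ker, LinearMap.mem_ker,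
    ← LinearMap.comm_comp_rTensor_comp_comm_eq]
  simp

lemma nonempty_comm (n : ℕ) (X Y : Type u) [AddCommGroup X] [Module R X] [AddCommGroup Y]
    [Module R Y] : Nonempty (torSucc R n X Y ≃ₗ[R] torSucc R n Y X) := by
  induction n generalizing Y with
  | zero => exact nonempty_comm_zero X Y
  | succ n ih =>
    obtain ⟨e⟩ := ih (syzygy R Y)
    obtain ⟨e'⟩ := nonempty_equiv_syzygy (R := R) n Y X
    exact ⟨e.trans e'.symm⟩

lemma finite [IsNoetherianRing R] (n : ℕ) (X Y : Type u) [AddCommGroup X] [Module R X]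
    [AddCommGroup Y] [Module R Y] [Module.Finite R X] [Module.Finite R Y] :
    Module.Finite R (torSucc R n X Y) := by
  induction n generalizing X with
  | zero =>
    obtain ⟨k, g, hg⟩ := Module.Finite.exists_fin' R X
    obtain ⟨e⟩ := nonempty_equiv_ker_of_isShortExact Y (isShortExact_ker_subtype hg)
    have : Module.Finite R (LinearMap.ker g) := Module.IsNoetherian.finite _ _
    have : Module.Finite R (LinearMap.ker g ⊗[R] Y) := Module.Finite.tensorProduct _ _ _
    have := isNoetherian_of_isNoetherianRing_of_finite R (LinearMap.ker g ⊗[R] Y)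
    have : Module.Finite R (LinearMap.ker ((LinearMap.ker g).subtype.rTensor Y)) :=
      Module.IsNoetherian.finite _ _
    exact Module.Finite.equiv e.symm
  | succ n ih =>
    obtain ⟨k, g, hg⟩ := Module.Finite.exists_fin' R X
    obtain ⟨e⟩ := nonempty_equiv_of_isShortExact n Y (isShortExact_ker_subtype hg)
    have := ih (LinearMap.ker g)
    exact Module.Finite.equiv e.symm

lemma smul_eq_zero_of_left {n : ℕ} {r : R} (hr : ∀ x : X, r • x = 0) (t : torSucc R n X Y) :
    r • t = 0 := by
  have : r • (LinearMap.id : X →ₗ[R] X) = 0 := by ext x; simp [hr]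
  rw [← torOne.map_smul_id, this]
  ext
  simp

lemma smul_eq_zero_of_right {n : ℕ} {r : R} (hr : ∀ y : Y, r • y = 0) (t : torSucc R n X Y) :
    r • t = 0 := by
  obtain ⟨e⟩ := nonempty_comm (R := R) n X Y
  apply e.injective
  rw [map_smul, smul_eq_zero_of_left hr, map_zero]

end torSucc

variable (R) in
/-- The vanishing of `Tor_{n+1}(X, Y)`. -/
def TorSuccVanish (n : ℕ) (X Y : Type u) [AddCommGroup X] [Module R X] [AddCommGroup Y]
    [Module R Y] : Prop :=
  Subsingleton (torSucc R n X Y)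

namespace TorSuccVanish

lemma comm {n : ℕ} : TorSuccVanish R n X Y ↔ TorSuccVanish R n Y X := by
  obtain ⟨e⟩ := torSucc.nonempty_comm (R := R) n X Y
  exact e.toEquiv.subsingleton_congr

lemma congr_left {n : ℕ} (e : X ≃ₗ[R] X') : TorSuccVanish R n X Y ↔ TorSuccVanish R n X' Y :=
  (torSucc.congrLeft n Y e).toEquiv.subsingleton_congr

lemma congr_right {n : ℕ} (e : Y ≃ₗ[R] Y') : TorSuccVanish R n X Y ↔ TorSuccVanish R n X Y' := by
  rw [comm, congr_left e, comm]

lemma of_flat_left (n : ℕ) [Module.Flat R X] : TorSuccVanish R n X Y :=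
  torOne.subsingleton_of_flat

variable {n : ℕ} {f : X' →ₗ[R] X} {g : X →ₗ[R] X''}

lemma succ_iff_left (h : IsShortExact f g) [Module.Flat R X] :
    TorSuccVanish R (n + 1) X'' Y ↔ TorSuccVanish R n X' Y := by
  obtain ⟨e⟩ := torSucc.nonempty_equiv_of_isShortExact n Y h
  exact e.toEquiv.subsingleton_congr

lemma succ_iff_right (h : IsShortExact f g) [Module.Flat R X] :
    TorSuccVanish R (n + 1) Y X'' ↔ TorSuccVanish R n Y X' := by
  rw [comm, succ_iff_left h, comm]

lemma zero_iff_injective_lTensor (h : IsShortExact f g) [Module.Flat R X] :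
    TorSuccVanish R 0 Y X'' ↔ Injective (f.lTensor Y) := by
  obtain ⟨e⟩ := torSucc.nonempty_equiv_ker_of_isShortExact Y h
  rw [comm, TorSuccVanish, e.toEquiv.subsingleton_congr, Submodule.subsingleton_iff_eq_bot,
    LinearMap.ker_eq_bot, LinearMap.lTensor_inj_iff_rTensor_inj]

lemma injective_map (h : IsShortExact f g) (h'' : TorSuccVanish R (n + 1) X'' Y) :
    Injective (torSucc.map n Y f) := by
  obtain ⟨δ, -, hδf⟩ := torSucc.exists_connecting n Y h
  have : Subsingleton _ := h''
  exact injective_of_exact hδf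

lemma injective_rTensor (h : IsShortExact f g) (h'' : TorSuccVanish R 0 X'' Y) :
    Injective (f.rTensor Y) := by
  obtain ⟨δ, -, hδf⟩ := torOne.exists_connecting_tensor Y h
  have : Subsingleton (torOne R X'' Y) := h''
  exact injective_of_exact (f := δ) hδf

lemma middle (h : IsShortExact f g) (h' : TorSuccVanish R n X' Y)
    (h'' : TorSuccVanish R n X'' Y) : TorSuccVanish R n X Y :=
  have : Subsingleton _ := h'
  have : Subsingleton _ := h''
  subsingleton_of_exact (torSucc.exact_map n Y h)

lemma right (h : IsShortExact f g) (hX : TorSuccVanish R (n + 1) X Y)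
    (h' : TorSuccVanish R n X' Y) : TorSuccVanish R (n + 1) X'' Y := by
  obtain ⟨δ, hgδ, -⟩ := torSucc.exists_connecting n Y h
  have : Subsingleton _ := hX
  have : Subsingleton _ := h'
  exact subsingleton_of_exact hgδ

lemma left (h : IsShortExact f g) (h'' : TorSuccVanish R (n + 1) X'' Y)
    (hX : TorSuccVanish R n X Y) : TorSuccVanish R n X' Y := by
  obtain ⟨δ, -, hδf⟩ := torSucc.exists_connecting n Y h
  have : Subsingleton _ := h''
  have : Subsingleton _ := hX
  exact subsingleton_of_exact hδf

lemma of_retract {i : X →ₗ[R] X'} {r : X' →ₗ[R] X} (h : r ∘ₗ i = LinearMap.id)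
    (h' : TorSuccVanish R n X' Y) : TorSuccVanish R n X Y := by
  have : Subsingleton (torSucc R n X' Y) := h'
  refine subsingleton_of_forall_eq 0 fun t => ?_
  rw [← torOne.map_id t, ← h, ← torOne.map_map, Subsingleton.elim (torOne.map _ i t) 0, map_zero]

end TorSuccVanish

end TorSucc

section Resolution

variable {R : Type u} [CommRing R]

lemma isShortExact_range_subtype {P₁ P₀ Y : Type u} [AddCommGroup P₁] [Module R P₁]
    [AddCommGroup P₀] [Module R P₀] [AddCommGroup Y] [Module R Y] {d : P₁ →ₗ[R] P₀}
    {π : P₀ →ₗ[R] Y} (h : Exact d π) (hπ : Surjective π) :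
    IsShortExact (LinearMap.range d).subtype π :=
  ⟨Submodule.injective_subtype _, LinearMap.exact_iff.2 <| by
    rw [Submodule.range_subtype, h.linearMap_ker_eq], hπ⟩

lemma exact_rangeRestrict {P₂ P₁ P₀ : Type u} [AddCommGroup P₂] [Module R P₂]
    [AddCommGroup P₁] [Module R P₁] [AddCommGroup P₀] [Module R P₀] {d₁ : P₂ →ₗ[R] P₁}
    {d₀ : P₁ →ₗ[R] P₀} (h : Exact d₁ d₀) : Exact d₁ d₀.rangeRestrict := fun x => by
  rw [← h x, Subtype.ext_iff]
  rfl

lemma exact_comp_iff_injective {A B C D : Type u} [AddCommGroup A] [Module R A]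
    [AddCommGroup B] [Module R B] [AddCommGroup C] [Module R C] [AddCommGroup D] [Module R D]
    {a : A →ₗ[R] B} {b : B →ₗ[R] C} {c : C →ₗ[R] D} (h : Exact a b) (hb : Surjective b) :
    Exact a (c ∘ₗ b) ↔ Injective c := by
  refine ⟨fun hc => (injective_iff_map_eq_zero c).2 fun x hx => ?_, fun hc x => ?_⟩
  · obtain ⟨y, rfl⟩ := hb x
    exact (h y).2 ((hc y).1 hx)
  · rw [← h x, LinearMap.comp_apply, map_eq_zero_iff c hc]

lemma torSuccVanish_iff_exact_lTensor (X : Type u) [AddCommGroup X] [Module R X] (n : ℕ)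
    {Y : Type u} [AddCommGroup Y] [Module R Y] (P : ℕ → ModuleCat.{u} R)
    (hP : ∀ n, Module.Flat R (P n))
    (d : ∀ n, P (n + 1) →ₗ[R] P n) (π : P 0 →ₗ[R] Y) (hπ : Surjective π) (h₀ : Exact (d 0) π)
    (h : ∀ n, Exact (d (n + 1)) (d n)) :
    TorSuccVanish R n X Y ↔ Exact ((d (n + 1)).lTensor X) ((d n).lTensor X) := by
  have := hP 0
  have hY := isShortExact_range_subtype h₀ hπ
  have hd := (d 0).surjective_rangeRestrict
  induction n generalizing Y P with
  | zero =>
    rw [TorSuccVanish.zero_iff_injective_lTensor hY, ← exact_comp_iff_injective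
      (lTensor_exact X (exact_rangeRestrict (h 0)) hd) (LinearMap.lTensor_surjective X hd),
      ← LinearMap.lTensor_comp, LinearMap.subtype_comp_codRestrict]
  | succ n ih =>
    rw [TorSuccVanish.succ_iff_right hY]
    exact ih (fun n => P (n + 1)) (fun n => hP (n + 1)) (fun n => d (n + 1)) (d 0).rangeRestrict hd
      (exact_rangeRestrict (h 0)) (fun n => h (n + 1)) (hP 1)
      (isShortExact_range_subtype (exact_rangeRestrict (h 0)) hd) (d 1).surjective_rangeRestrict

end Resolution

section DerivedFunctors

variable {R : Type} [CommRing R]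

theorem torVanish_succ_iff {X Y : Type} [AddCommGroup X] [Module R X] [AddCommGroup Y]
    [Module R Y] (n : ℕ) : TorVanish R X Y (n + 1) ↔ TorSuccVanish R n X Y := by
  let P := projectiveResolution (ModuleCat.of R Y)
  have hP (n : ℕ) : Module.Projective R (P.complex.X n) :=
    (IsProjective.iff_projective _).2 (P.projective n)
  have exact_zero : Exact (P.complex.d 1 0).hom (P.π.f 0).hom :=
    (ShortComplex.ShortExact.moduleCat_exact_iff_function_exact _).1 P.exact₀
  have exact_succ (n : ℕ) : Exact (P.complex.d (n + 2) (n + 1)).hom (P.complex.d (n + 1) n).hom :=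
    (ShortComplex.ShortExact.moduleCat_exact_iff_function_exact _).1 (P.exact_succ n)
  have torSucc_iff : TorSuccVanish R n X Y ↔ _ := torSuccVanish_iff_exact_lTensor X n
    (fun n => P.complex.X n) (fun _ => inferInstance)
    (fun n => (P.complex.d (n + 1) n).hom) (P.π.f 0).hom
    ((ModuleCat.epi_iff_surjective (P.π.f 0)).1 inferInstance) exact_zero exact_succ
  let F := (MonoidalCategory.tensoringLeft (ModuleCat.{0} R)).obj (ModuleCat.of R X)
  let e : ((Tor (ModuleCat R) (n + 1)).obj (ModuleCat.of R X)).obj (ModuleCat.of R Y) ≅ _ :=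
    P.isoLeftDerivedObj F (n + 1)
  rw [torSucc_iff, TorVanish, ← ModuleCat.isZero_iff_subsingleton, e.isZero_iff]
  refine (HomologicalComplex.exactAt_iff_isZero_homology
    ((F.mapHomologicalComplex (ComplexShape.down ℕ)).obj P.complex) (n + 1)).symm.trans ?_
  rw [HomologicalComplex.exactAt_iff' _ (n + 2) (n + 1) n
    (by simp only [ChainComplex.prev]; rfl) (by simp),
    ShortComplex.ShortExact.moduleCat_exact_iff_function_exact]
  rfl

theorem projDimFinite_of_hasProjectiveDimensionLE {Y : Type} [AddCommGroup Y] [Module R Y]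
    (h : ∃ n, HasProjectiveDimensionLE (ModuleCat.of R Y) n) : ProjDimFinite R Y := by
  obtain ⟨n, h⟩ := h
  refine ⟨n + 1, fun Z i hi => ?_⟩
  obtain ⟨i, rfl⟩ := Nat.exists_eq_add_of_le' (Nat.le_of_add_left_le hi)
  let P := projectiveResolution (ModuleCat.of R Y)
  rw [ExtVanish, ← ModuleCat.isZero_iff_subsingleton]
  refine Limits.IsZero.of_iso ?_ (P.isoExt (R := R) (i + 1) Z)
  rw [← HomologicalComplex.exactAt_iff_isZero_homology, HomologicalComplex.exactAt_iff' _ i (i + 1)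
    (i + 2) (by simp) (by simp only [CochainComplex.next]; rfl), ShortComplex.moduleCat_exact_iff]
  intro (φ : P.complex.X (i + 1) ⟶ Z) hφ
  exact (P.extMk_eq_zero_iff φ (i + 2) rfl hφ i rfl).1
    (Abelian.Ext.eq_zero_of_hasProjectiveDimensionLT _ _ hi)

end DerivedFunctors

section ProjectiveDimension

variable {R : Type u} [CommRing R]

lemma IsShortExact.hasProjectiveDimensionLE_succ_iff {X' X X'' : Type u} [AddCommGroup X]
    [Module R X] [AddCommGroup X'] [Module R X'] [AddCommGroup X''] [Module R X'']
    {f : X' →ₗ[R] X} {g : X →ₗ[R] X''} (h : IsShortExact f g) [Module.Projective R X] (n : ℕ) :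
    HasProjectiveDimensionLE (ModuleCat.of R X'') (n + 1) ↔
      HasProjectiveDimensionLE (ModuleCat.of R X') n := by
  let S : ShortComplex (ModuleCat.{u} R) := .mk (ModuleCat.ofHom f) (ModuleCat.ofHom g)
    (ModuleCat.hom_ext h.exact.linearMap_comp_eq_zero)
  have hS : S.ShortExact :=
    { exact := (ShortComplex.ShortExact.moduleCat_exact_iff_function_exact S).2 h.exact
      mono_f := (ModuleCat.mono_iff_injective _).2 h.injective
      epi_g := (ModuleCat.epi_iff_surjective _).2 h.surjective }
  exact hS.hasProjectiveDimensionLT_X₃_iff n ((IsProjective.iff_projective X).1 inferInstance)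

lemma projective_of_torSuccVanish_zero [IsNoetherianRing R] {Y : Type u} [AddCommGroup Y]
    [Module R Y] [Module.Finite R Y] (h : ∀ I : Ideal R, TorSuccVanish R 0 (R ⧸ I) Y) :
    Module.Projective R Y := by
  have : Module.Flat R Y := by
    rw [Module.Flat.iff_lTensor_injective']
    exact fun I => (TorSuccVanish.zero_iff_injective_lTensor (isShortExact_subtype_mkQ I)).1
      (TorSuccVanish.comm.1 (h I))
  have : Module.FinitePresentation R Y := Module.finitePresentation_of_finite R Y
  exact Module.Flat.projective_of_finitePresentation

theorem hasProjectiveDimensionLE_of_torSuccVanish [IsNoetherianRing R] {n : ℕ} {Y : Type u}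
    [AddCommGroup Y] [Module R Y] [Module.Finite R Y]
    (h : ∀ I : Ideal R, TorSuccVanish R n (R ⧸ I) Y) :
    HasProjectiveDimensionLE (ModuleCat.of R Y) n := by
  induction n generalizing Y with
  | zero =>
    have := projective_of_torSuccVanish_zero h
    rw [IsProjective.iff_projective] at this
    exact (projective_iff_hasProjectiveDimensionLE_zero _).1 this
  | succ n ih =>
    obtain ⟨k, g, hg⟩ := Module.Finite.exists_fin' R Y
    have hY := isShortExact_ker_subtype hg
    rw [hY.hasProjectiveDimensionLE_succ_iff]
    exact ih fun I => (TorSuccVanish.succ_iff_right hY).1 (h I)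

end ProjectiveDimension

section BaseChange

variable {A A' : Type u} [CommRing A] [CommRing A'] [Algebra A A']
variable (M : Type u) [AddCommGroup M] [Module A M] [Module A' M] [IsScalarTower A A' M]
variable {K F L : Type u} [AddCommGroup K] [Module A K] [AddCommGroup F] [Module A F]
  [AddCommGroup L] [Module A L]

lemma isShortExact_baseChange_freeCover (hL : TorSuccVanish A 0 A' L) :
    IsShortExact (X' := A' ⊗[A] syzygy A L) (X := A' ⊗[A] (L →₀ A))
      ((syzygy A L).subtype.baseChange A') ((freeCover A L).baseChange A') :=
  have h := isShortExact_freeCover A L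
  { injective := (TorSuccVanish.zero_iff_injective_lTensor h).1 hL
    exact := lTensor_exact (M := syzygy A L) (N := L →₀ A) (P := L) A' h.exact h.surjective
    surjective := LinearMap.lTensor_surjective A' h.surjective }

lemma lTensor_baseChange_injective_iff (i : K →ₗ[A] F) :
    Injective ((i.baseChange A').lTensor M) ↔ Injective (i.lTensor M) := by
  let eK := AlgebraTensorModule.cancelBaseChange A A' A' M K
  let eF := AlgebraTensorModule.cancelBaseChange A A' A' M F
  have hcomm : eF.toLinearMap ∘ₗ (i.baseChange A').lTensor M =
      AlgebraTensorModule.lTensor A' M i ∘ₗ eK.toLinearMap := by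
    ext m k
    simp [eK, eF]
  calc Injective ((i.baseChange A').lTensor M)
      ↔ Injective (eF ∘ (i.baseChange A').lTensor M) := (eF.injective.of_comp_iff _).symm
    _ ↔ Injective (i.lTensor M ∘ eK) := by
      exact iff_of_eq (congrArg Injective (congrArg DFunLike.coe hcomm))
    _ ↔ Injective (i.lTensor M) := Injective.of_comp_iff' _ eK.bijective

theorem torSuccVanish_baseChange_iff (n : ℕ) (L : Type u) [AddCommGroup L] [Module A L]
    (hL : ∀ n, TorSuccVanish A n A' L) :
    TorSuccVanish A' n M (A' ⊗[A] L) ↔ TorSuccVanish A n M L := by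
  induction n generalizing L with
  | zero =>
    rw [TorSuccVanish.zero_iff_injective_lTensor (isShortExact_freeCover A L),
      TorSuccVanish.zero_iff_injective_lTensor (isShortExact_baseChange_freeCover (hL 0)),
      lTensor_baseChange_injective_iff M (K := syzygy A L) (F := L →₀ A)]
  | succ n ih =>
    rw [TorSuccVanish.succ_iff_right (isShortExact_freeCover A L),
      TorSuccVanish.succ_iff_right (isShortExact_baseChange_freeCover (hL 0)), ih (syzygy A L)]
    exact fun n => (TorSuccVanish.succ_iff_right (isShortExact_freeCover A L)).1 (hL (n + 1))

/-- Restriction of scalars along a surjection is fully faithful, so extension of scalars undoes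
it. -/
noncomputable def tensorEquivOfSurjective (hs : Surjective (algebraMap A A')) :
    A' ⊗[A] M ≃ₗ[A'] M :=
  have := TensorProduct.CompatibleSMul.of_algebraMap_surjective A' M hs
  have := TensorProduct.CompatibleSMul.of_algebraMap_surjective A' A' hs
  TensorProduct.lidOfCompatibleSMul A A' M

theorem torSuccVanish_iff_of_bijective (N : Type u) [AddCommGroup N] [Module A N] [Module A' N]
    [IsScalarTower A A' N] (hb : Bijective (algebraMap A A')) (n : ℕ) :
    TorSuccVanish A' n M N ↔ TorSuccVanish A n M N := by
  have : Module.Flat A A' :=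
    .of_linearEquiv (LinearEquiv.ofBijective (Algebra.linearMap A A') hb).symm
  exact (TorSuccVanish.congr_right (tensorEquivOfSurjective N hb.2).symm).trans
    (torSuccVanish_baseChange_iff M n N fun n => .of_flat_left n)

end BaseChange

section ChangeOfRings

/-- The vanishing pattern `u` of `Tor` over `A / (f)` and the one `v` over `A`, for `f` regular, are
linked by the long exact sequence
`⋯ → Tor'_{n+3} → Tor'_{n+1} → Tor_{n+2} → Tor'_{n+2} → Tor'_n → Tor_{n+1} → ⋯`.
As for `TorSuccVanish`, position `n` stands for the index `n + 1` of `Tor`. -/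
structure ChangeOfRingsLink (u v : ℕ → Prop) : Prop where
  middle {n : ℕ} : u n → u (n + 1) → v (n + 1)
  left {n : ℕ} : v (n + 1) → u (n + 2) → u n
  right {n : ℕ} : v (n + 2) → u n → u (n + 2)

variable {A A' : Type u} [CommRing A] [CommRing A'] [Algebra A A'] {f : A}
variable {M N : Type u} [AddCommGroup M] [Module A M] [Module A' M] [IsScalarTower A A' M]
  [AddCommGroup N] [Module A N] [Module A' N] [IsScalarTower A A' N]

lemma nonempty_ker_baseChange_syzygy_equiv
    (h : IsShortExact (LinearMap.lsmul A A f) (Algebra.linearMap A A')) :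
    Nonempty (LinearMap.ker ((syzygy A N).subtype.baseChange A') ≃ₗ[A'] N) := by
  have hfN (x : N) : f • x = 0 := by
    have hf : algebraMap A A' f = 0 := (h.exact f).2 ⟨1, by simp⟩
    rw [← algebraMap_smul A', hf, zero_smul]
  have hker : LinearMap.ker (LinearMap.rTensor N (LinearMap.lsmul A A f)) = ⊤ := by
    rw [LinearMap.ker_eq_top]
    ext x
    simpa using show (f • (1 : A)) ⊗ₜ[A] x = 0 by
      rw [TensorProduct.smul_tmul, hfN, TensorProduct.tmul_zero]
  obtain ⟨e⟩ := torSucc.nonempty_equiv_ker_of_isShortExact N h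
  let e' : torSucc A 0 A' N ≃ₗ[A] N :=
    e ≪≫ₗ LinearEquiv.ofTop _ hker ≪≫ₗ TensorProduct.lid A N
  let e'' : LinearMap.ker ((syzygy A N).subtype.baseChange A') ≃ₗ[A] N := e'
  exact ⟨e''.extendScalarsOfSurjective h.surjective⟩

/-- As `A' = A / (f)` has the resolution `0 → A → A`, the base change of a free cover of `N`
computes `Tor_1^A(A', N) = N` and no higher `Tor`. -/
theorem changeOfRingsLink
    (h : IsShortExact (LinearMap.lsmul A A f) (Algebra.linearMap A A')) :
    ChangeOfRingsLink (TorSuccVanish A' · M N) (TorSuccVanish A · M N) := by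
  obtain ⟨e⟩ := nonempty_ker_baseChange_syzygy_equiv (N := N) h
  set φ := (syzygy A N).subtype.baseChange A'
  let π : A' ⊗[A] (N →₀ A) →ₗ[A'] N :=
    (tensorEquivOfSurjective N h.surjective).toLinearMap ∘ₗ (freeCover A N).baseChange A'
  have hcover := isShortExact_freeCover A N
  have hφπ : Exact φ π := LinearEquiv.postcomp_exact_iff_exact.2 <|
    lTensor_exact (M := syzygy A N) (N := N →₀ A) (P := N) A' hcover.exact hcover.surjective
  have hπ := isShortExact_range_subtype hφπ <|
    (tensorEquivOfSurjective N h.surjective).surjective.comp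
      (LinearMap.lTensor_surjective A' hcover.surjective)
  have hψ : IsShortExact (X'' := LinearMap.range φ) (LinearMap.ker φ).subtype φ.rangeRestrict :=
    { injective := Submodule.injective_subtype _
      exact := exact_rangeRestrict (P₂ := LinearMap.ker φ) φ.exact_subtype_ker_map
      surjective := φ.surjective_rangeRestrict }
  have hN {n} : TorSuccVanish A' n M N ↔ TorSuccVanish A' n (LinearMap.ker φ) M := by
    rw [TorSuccVanish.comm, TorSuccVanish.congr_left (X' := LinearMap.ker φ) e.symm]
  have hsyz {n} : TorSuccVanish A (n + 1) M N ↔ TorSuccVanish A' n (A' ⊗[A] syzygy A N) M := by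
    rw [TorSuccVanish.succ_iff_right hcover, TorSuccVanish.comm (R := A')]
    exact (torSuccVanish_baseChange_iff M n (syzygy A N) fun n =>
      (TorSuccVanish.succ_iff_right hcover).1 <|
        (TorSuccVanish.succ_iff_left h).2 (.of_flat_left n)).symm
  have hrange {n} : TorSuccVanish A' (n + 1) M N ↔ TorSuccVanish A' n (LinearMap.range φ) M := by
    rw [TorSuccVanish.succ_iff_right hπ, TorSuccVanish.comm]
  exact
    { middle := fun h h' => hsyz.2 (.middle hψ (hN.1 h) (hrange.1 h'))
      left := fun h h' => hN.2 (.left hψ (hrange.1 h') (hsyz.1 h))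
      right := fun h h' => hrange.2 (.right hψ (hsyz.1 h) (hN.1 h')) }

end ChangeOfRings

section ChangeOfRingsChain

/-- `c` successive links: the vanishing pattern `u` of `Tor` over `A / (f₁, …, f_c)` and the one `v`
over `A`. -/
inductive ChangeOfRingsChain : ℕ → (ℕ → Prop) → (ℕ → Prop) → Prop
  | refl (u : ℕ → Prop) : ChangeOfRingsChain 0 u u
  | cons {c : ℕ} {u v w : ℕ → Prop} (hc : ChangeOfRingsChain c u v) (hl : ChangeOfRingsLink v w) :
      ChangeOfRingsChain (c + 1) u w

lemma exists_quotient_by_first {A S : Type u} [CommRing A] [CommRing S] [Algebra A S] {f : A}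
    {fs : List A} (hreg : IsWeaklyRegular A (f :: fs))
    (hs : Surjective (algebraMap A S))
    (hker : RingHom.ker (algebraMap A S) = Ideal.ofList (f :: fs)) :
    ∃ (B : Type u) (_ : CommRing B) (_ : Algebra A B) (_ : Algebra B S),
      IsScalarTower A B S ∧ IsShortExact (LinearMap.lsmul A A f) (Algebra.linearMap A B) ∧
      IsWeaklyRegular B (fs.map (algebraMap A B)) ∧
      Surjective (algebraMap B S) ∧
      RingHom.ker (algebraMap B S) = Ideal.ofList (fs.map (algebraMap A B)) := by
  obtain ⟨hf, hfs⟩ := (isWeaklyRegular_cons_iff A f fs).1 hreg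
  let π := Ideal.Quotient.mk (Ideal.span {f})
  have hπ : Surjective π := Ideal.Quotient.mk_surjective
  let φ : A ⧸ Ideal.span {f} →+* S := Ideal.Quotient.lift _ (algebraMap A S) fun a ha => by
    rw [← RingHom.mem_ker, hker, Ideal.ofList_cons]
    exact Ideal.mem_sup_left ha
  have hφ : φ.comp π = algebraMap A S := rfl
  let _ : Algebra (A ⧸ Ideal.span {f}) S := φ.toAlgebra
  refine ⟨A ⧸ Ideal.span {f}, inferInstance, inferInstance, inferInstance,
    IsScalarTower.of_algebraMap_eq' hφ.symm, ⟨hf, ?_, hπ⟩, ?_, .of_comp (g := π) hs, ?_⟩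
  · intro a
    rw [Algebra.linearMap_apply, Ideal.Quotient.algebraMap_eq, Ideal.Quotient.eq_zero_iff_mem,
      Ideal.mem_span_singleton']
    simp [mul_comm]
  · rw [isWeaklyRegular_map_algebraMap_iff]
    have hspan : f • (⊤ : Submodule A A) = Ideal.span {f} := by
      simp [← Submodule.ideal_span_singleton_smul]
    exact ((Submodule.quotEquivOfEq _ _ hspan).isWeaklyRegular_congr fs).1 hfs
  · change RingHom.ker φ = Ideal.ofList (fs.map π)
    rw [← Ideal.map_comap_of_surjective π hπ (RingHom.ker φ), RingHom.comap_ker, hφ, hker,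
      Ideal.map_ofList, List.map_cons, Ideal.ofList_cons]
    simp [π]

theorem changeOfRingsChain {S : Type u} [CommRing S] (M N : Type u) [AddCommGroup M] [Module S M]
    [AddCommGroup N] [Module S N] {A : Type u} [CommRing A] [Algebra A S] [Module A M] [Module A N]
    [IsScalarTower A S M] [IsScalarTower A S N] {fs : List A}
    (hreg : IsWeaklyRegular A fs) (hs : Surjective (algebraMap A S))
    (hker : RingHom.ker (algebraMap A S) = Ideal.ofList fs) :
    ChangeOfRingsChain fs.length (TorSuccVanish S · M N) (TorSuccVanish A · M N) := by
  obtain ⟨c, hc⟩ : ∃ c, fs.length = c := ⟨_, rfl⟩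
  induction c generalizing A with
  | zero =>
    obtain rfl := List.length_eq_zero_iff.1 hc
    have hb : Bijective (algebraMap A S) :=
      ⟨(RingHom.injective_iff_ker_eq_bot _).2 (hker.trans Ideal.ofList_nil), hs⟩
    simp only [torSuccVanish_iff_of_bijective M N hb]
    exact .refl _
  | succ c ih =>
    obtain ⟨f, fs, rfl⟩ := List.exists_cons_of_length_eq_add_one hc
    obtain ⟨B, _, _, _, _, hB, hreg', hs', hker'⟩ := exists_quotient_by_first hreg hs hker
    let _ : Module B M := Module.compHom M (algebraMap B S)
    let _ : Module B N := Module.compHom N (algebraMap B S)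
    have : IsScalarTower B S M := ⟨fun b s m => by rw [Algebra.smul_def, mul_smul]; rfl⟩
    have : IsScalarTower B S N := ⟨fun b s m => by rw [Algebra.smul_def, mul_smul]; rfl⟩
    have : IsScalarTower A B M := .to₁₂₄ A B S M
    have : IsScalarTower A B N := .to₁₂₄ A B S N
    have hchain := ih hreg' hs' hker' (by simpa using hc)
    rw [List.length_map] at hchain
    exact .cons hchain (changeOfRingsLink hB)

lemma ChangeOfRingsLink.forall_of_pair {u v : ℕ → Prop} (h : ChangeOfRingsLink u v) {b t : ℕ}
    (htb : t ≤ b) (hv : ∀ i, t < i → v i) (hb : u b ∧ u (b + 1)) {i : ℕ} (hi : t ≤ i) : u i := by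
  suffices u i ∧ u (i + 1) from this.1
  rcases le_total b i with hbi | hib
  · induction i, hbi using Nat.le_induction with
    | base => exact hb
    | succ j hbj ih =>
      have huj := ih (htb.trans hbj)
      exact ⟨huj.2, h.right (hv _ (by lia)) huj.1⟩
  · exact Nat.decreasingInduction' (P := fun j => u j ∧ u (j + 1))
      (fun j _ hij huj => ⟨h.left (hv _ (by lia)) huj.2, huj.1⟩) hib hb

namespace ChangeOfRingsChain

variable {c : ℕ} {u v : ℕ → Prop}

lemma descend (h : ChangeOfRingsChain c u v) {a e : ℕ} (hu : ∀ i, a ≤ i → i ≤ a + c + e → u i)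
    {i : ℕ} (hai : a + c ≤ i) (hie : i ≤ a + c + e) : v i := by
  induction h generalizing e i with
  | refl => exact hu i hai hie
  | cons _ hl ih =>
    obtain ⟨j, rfl⟩ := Nat.exists_eq_add_of_le' (Nat.le_of_add_left_le hai)
    have hv {j} := ih (e := e + 1) (i := j) fun i hi hi' => hu i hi (by lia)
    exact hl.middle (hv (by lia) (by lia)) (hv (by lia) (by lia))

lemma ascend (h : ChangeOfRingsChain c u v) {a t : ℕ} (hta : t ≤ a) (hv : ∀ i, t + c ≤ i → v i)
    (hu : ∀ i, a ≤ i → i ≤ a + c → u i) {i : ℕ} (hi : t ≤ i) : u i := by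
  induction h with
  | refl => exact hv i hi
  | @cons c u v w hc hl ih =>
    have hpair : v (a + c) ∧ v (a + c + 1) :=
      ⟨hc.descend (e := 1) hu (by lia) (by lia), hc.descend (e := 1) hu (by lia) (by lia)⟩
    exact ih (fun i hi => hl.forall_of_pair (t := t + c) (by lia) hv hpair hi)
      (fun i hi hi' => hu i hi (by lia))

end ChangeOfRingsChain

end ChangeOfRingsChain

section RegularSequence

variable {R : Type u} [CommRing R]

/-- The quotient `X / (r₁, …, rₙ)X` of `X` by a list of elements. -/
abbrev QuotListSMulTop (rs : List R) (X : Type u) [AddCommGroup X] [Module R X] : Type u :=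
  X ⧸ (Ideal.ofList rs • (⊤ : Submodule R X))

variable {X Y : Type u} [AddCommGroup X] [Module R X] [AddCommGroup Y] [Module R Y]

variable (R X) in
/-- The identification of `X / (∅)X` with `X`. -/
noncomputable def quotListSMulTopNilEquiv : QuotListSMulTop ([] : List R) X ≃ₗ[R] X :=
  Submodule.quotEquivOfEqBot _ (by simp)

lemma isShortExact_smul_mkQ {r : R} (hr : IsSMulRegular X r) :
    IsShortExact (r • (LinearMap.id : X →ₗ[R] X)) (r • (⊤ : Submodule R X)).mkQ :=
  ⟨hr, LinearMap.exact_lsmul_mkQ_smul_top X r, Submodule.mkQ_surjective _⟩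

namespace torSucc

variable {n : ℕ} {r : R}

lemma exact_smul_map_mkQ (n : ℕ) (Y : Type u) [AddCommGroup Y] [Module R Y]
    (hr : IsSMulRegular X r) :
    Exact (fun t : torSucc R n X Y => r • t) (map n Y (r • (⊤ : Submodule R X)).mkQ) := by
  convert exact_map n Y (isShortExact_smul_mkQ hr) using 1
  exact funext fun t => (torOne.map_smul_id r t).symm

lemma exists_injective_torsion_le_range (hr : IsSMulRegular X r)
    (h : TorSuccVanish R (n + 1) X Y) :
    ∃ δ : torSucc R (n + 1) (QuotSMulTop r X) Y →ₗ[R] torSucc R n X Y,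
      Injective δ ∧ ∀ t, r • t = 0 → t ∈ LinearMap.range δ := by
  obtain ⟨δ, hgδ, hδr⟩ := exists_connecting n Y (isShortExact_smul_mkQ hr)
  have : Subsingleton (torSucc R (n + 1) X Y) := h
  have hδ : Injective δ := injective_of_exact (f := map (n + 1) Y (r • (⊤ : Submodule R X)).mkQ) hgδ
  refine ⟨δ, hδ, fun t ht => (hδr t).1 ?_⟩
  rwa [torOne.map_smul_id]

lemma isSMulRegular_of_quotSMulTop (hr : IsSMulRegular X r)
    (h : TorSuccVanish R (n + 1) (QuotSMulTop r X) Y) : IsSMulRegular (torSucc R n X Y) r := by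
  intro s t hst
  apply h.injective_map (isShortExact_smul_mkQ hr)
  rwa [torOne.map_smul_id, torOne.map_smul_id]

end torSucc

namespace TorSuccVanish

variable {n : ℕ}

lemma quotSMulTop {r : R} (hr : IsSMulRegular X r) (h : TorSuccVanish R (n + 1) X Y)
    (h' : TorSuccVanish R n X Y) : TorSuccVanish R (n + 1) (QuotSMulTop r X) Y :=
  right (isShortExact_smul_mkQ hr) h h'

lemma of_quotSMulTop [IsLocalRing R] [IsNoetherianRing R] [Module.Finite R X] [Module.Finite R Y]
    {r : R} (hr : IsSMulRegular X r) (hm : r ∈ maximalIdeal R)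
    (h : TorSuccVanish R n (QuotSMulTop r X) Y) : TorSuccVanish R n X Y := by
  have : Subsingleton _ := h
  have := torSucc.finite (R := R) n X Y
  by_contra hX
  have : Nontrivial (torSucc R n X Y) := not_subsingleton_iff_nontrivial.1 hX
  have := nontrivial_quotSMulTop_of_mem_maximalIdeal (torSucc R n X Y) hm
  obtain ⟨z, hz⟩ := exists_ne (0 : QuotSMulTop r (torSucc R n X Y))
  obtain ⟨t, rfl⟩ := Submodule.mkQ_surjective _ z
  obtain ⟨s, rfl⟩ := (torSucc.exact_smul_map_mkQ n Y hr t).1 (Subsingleton.elim _ _)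
  exact hz ((LinearMap.exact_lsmul_mkQ_smul_top _ r).apply_apply_eq_zero s)

lemma quotListSMulTop_cons_iff {r : R} {rs : List R} :
    TorSuccVanish R n (QuotListSMulTop (r :: rs) X) Y ↔
      TorSuccVanish R n (QuotListSMulTop rs (QuotSMulTop r X)) Y :=
  congr_left (Submodule.quotOfListConsSMulTopEquivQuotSMulTopInner X r rs)

lemma quotListSMulTop {rs : List R} (hrs : IsWeaklyRegular X rs)
    (h : ∀ i, n ≤ i → i ≤ n + rs.length → TorSuccVanish R i X Y) :
    TorSuccVanish R (n + rs.length) (QuotListSMulTop rs X) Y := by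
  induction rs generalizing X n with
  | nil => exact (congr_left (quotListSMulTopNilEquiv R X)).2 (h n le_rfl le_rfl)
  | cons r rs ih =>
    obtain ⟨hr, hrs⟩ := (isWeaklyRegular_cons_iff X r rs).1 hrs
    rw [List.length_cons] at h ⊢
    rw [quotListSMulTop_cons_iff, show n + (rs.length + 1) = n + 1 + rs.length by lia]
    refine ih hrs fun i hi hi' => ?_
    obtain ⟨i, rfl⟩ := Nat.exists_eq_add_of_le' (Nat.le_of_add_left_le hi)
    exact quotSMulTop hr (h _ (by lia) (by lia)) (h _ (by lia) (by lia))

lemma quotListSMulTop_self {rs : List R} (hrs : IsWeaklyRegular R rs) (hn : rs.length ≤ n) :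
    TorSuccVanish R n (QuotListSMulTop rs R) Y := by
  obtain ⟨k, rfl⟩ := Nat.exists_eq_add_of_le' hn
  exact quotListSMulTop hrs fun i _ _ => of_flat_left i

lemma of_quotListSMulTop [IsLocalRing R] [IsNoetherianRing R] [Module.Finite R X]
    [Module.Finite R Y] {rs : List R} (hrs : IsWeaklyRegular X rs)
    (hm : ∀ r ∈ rs, r ∈ maximalIdeal R) (h : TorSuccVanish R n (QuotListSMulTop rs X) Y) :
    TorSuccVanish R n X Y := by
  induction rs generalizing X with
  | nil => exact (congr_left (quotListSMulTopNilEquiv R X)).1 h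
  | cons r rs ih =>
    obtain ⟨hr, hrs⟩ := (isWeaklyRegular_cons_iff X r rs).1 hrs
    obtain ⟨hmr, hm⟩ := List.forall_mem_cons.1 hm
    exact of_quotSMulTop hr hmr (ih hrs hm (quotListSMulTop_cons_iff.1 h))

/-- Each `X`-regular element acting nilpotently on `Y` lowers by one the index from which on `Tor`
vanishes, since it acts both nilpotently and injectively on the `Tor` one step below. -/
lemma of_isWeaklyRegular_of_nilpotent {n₀ : ℕ}
    (hY : ∀ (X : Type u) [AddCommGroup X] [Module R X] (i : ℕ), n₀ ≤ i → TorSuccVanish R i X Y)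
    {rs : List R} (hnil : ∀ r ∈ rs, ∃ k : ℕ, ∀ y : Y, r ^ k • y = 0) (hrs : IsWeaklyRegular X rs)
    (hn : n₀ ≤ n + rs.length) : TorSuccVanish R n X Y := by
  induction rs generalizing X n with
  | nil => exact hY X n hn
  | cons r rs ih =>
    obtain ⟨hr, hrs⟩ := (isWeaklyRegular_cons_iff X r rs).1 hrs
    obtain ⟨⟨k, hk⟩, hnil⟩ := List.forall_mem_cons.1 hnil
    rw [List.length_cons] at hn
    have hreg := torSucc.isSMulRegular_of_quotSMulTop (Y := Y) (n := n) hr (ih hnil hrs (by lia))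
    refine subsingleton_of_forall_eq 0 fun t => hreg.pow k ?_
    simpa using torSucc.smul_eq_zero_of_right hk t

lemma quotListSMulTop_right {rs xs : List R} (hrs : IsWeaklyRegular X rs)
    (hxs : IsWeaklyRegular R xs) (hnil : ∀ r ∈ rs, ∃ k : ℕ, r ^ k ∈ Ideal.ofList xs)
    (hn : xs.length ≤ n + rs.length) : TorSuccVanish R n X (QuotListSMulTop xs R) := by
  refine .of_isWeaklyRegular_of_nilpotent (n₀ := xs.length)
    (fun X _ _ i hi => comm.1 (.quotListSMulTop_self hxs hi)) (fun r hr => ?_) hrs hn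
  obtain ⟨k, hk⟩ := hnil r hr
  exact ⟨k, fun _ => Module.isTorsionBySet_quotient_ideal_smul R _ (a := ⟨_, hk⟩)⟩

end TorSuccVanish

lemma isWeaklyRegular_tensorProduct [IsLocalRing R] [IsNoetherianRing R] [Module.Finite R X]
    [Module.Finite R Y] {rs : List R} (hrs : IsWeaklyRegular X rs)
    (hm : ∀ r ∈ rs, r ∈ maximalIdeal R) (h : TorSuccVanish R 0 (QuotListSMulTop rs X) Y) :
    IsWeaklyRegular (X ⊗[R] Y) rs := by
  induction rs generalizing X with
  | nil => exact .nil R _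
  | cons r rs ih =>
    obtain ⟨hr, hrs⟩ := (isWeaklyRegular_cons_iff X r rs).1 hrs
    obtain ⟨hmr, hm⟩ := List.forall_mem_cons.1 hm
    rw [TorSuccVanish.quotListSMulTop_cons_iff] at h
    refine .cons ?_ (((QuotSMulTop.quotSMulTopTensorEquivQuotSMulTop r Y X).isWeaklyRegular_congr
      rs).1 (ih hrs hm h))
    have inj := (TorSuccVanish.of_quotListSMulTop hrs hm h).injective_rTensor
      (isShortExact_smul_mkQ hr)
    exact fun s t hst => inj (by simpa [LinearMap.rTensor_smul] using hst)

lemma isWeaklyRegular_of_torSuccVanish_zero [IsLocalRing R] [IsNoetherianRing R]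
    [Module.Finite R Y] {rs : List R} (hrs : IsWeaklyRegular R rs)
    (hm : ∀ r ∈ rs, r ∈ maximalIdeal R) (h : TorSuccVanish R 0 (QuotListSMulTop rs R) Y) :
    IsWeaklyRegular Y rs :=
  ((TensorProduct.lid R Y).isWeaklyRegular_congr rs).1 (isWeaklyRegular_tensorProduct hrs hm h)

end RegularSequence

section MinimalMultiplicity

variable {R : Type u} [CommRing R]
variable {X X' X'' Y : Type u} [AddCommGroup X] [Module R X] [AddCommGroup X'] [Module R X']
  [AddCommGroup X''] [Module R X''] [AddCommGroup Y] [Module R Y]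

lemma exists_finite_syzygy [IsNoetherianRing R] (n : ℕ) (X : Type u) [AddCommGroup X] [Module R X]
    [Module.Finite R X] : ∃ Ω : ModuleCat.{u} R, Module.Finite R Ω ∧
      ∀ (i : ℕ) (Y : Type u) [AddCommGroup Y] [Module R Y],
        TorSuccVanish R i Ω Y ↔ TorSuccVanish R (i + n) X Y := by
  induction n generalizing X with
  | zero => exact ⟨.of R X, ‹_›, fun _ _ _ _ => Iff.rfl⟩
  | succ n ih =>
    obtain ⟨k, g, hg⟩ := Module.Finite.exists_fin' R X
    obtain ⟨Ω, hfin, hΩ⟩ := ih (LinearMap.ker g)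
    refine ⟨Ω, hfin, fun i Y _ _ => (hΩ i Y).trans ?_⟩
    rw [← add_assoc, TorSuccVanish.succ_iff_left (isShortExact_ker_subtype hg)]

lemma exists_minimal_free_cover [IsLocalRing R] (X : Type u) [AddCommGroup X] [Module R X]
    [Module.Finite R X] : ∃ (k : ℕ) (g : (Fin k → R) →ₗ[R] X), Surjective g ∧
      LinearMap.ker g ≤ maximalIdeal R • ⊤ := by
  let b := Module.finBasis (ResidueField R) (ResidueField R ⊗[R] X)
  choose v hv using fun i => TensorProduct.mk_surjective R X _ residue_surjective (b i)
  refine ⟨_, Fintype.linearCombination R v, ?_, fun w hw => ?_⟩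
  · rw [← LinearMap.range_eq_top, Fintype.range_linearCombination,
      span_eq_top_of_tmul_eq_basis v b hv]
  · have hsum : ∑ i, residue R (w i) • b i = 0 := by
      have := congrArg (TensorProduct.mk R (ResidueField R) X 1) hw
      simp only [Fintype.linearCombination_apply, map_sum, map_smul, hv, map_zero] at this
      exact this
    rw [pi_eq_sum_univ w]
    refine sum_mem fun i _ => Submodule.smul_mem_smul ?_ Submodule.mem_top
    exact (residue_eq_zero_iff _).1 (Fintype.linearIndependent_iff.1 b.linearIndependent _ hsum i)

lemma one_tmul_eq_zero_iff_mem_smul_top {I : Ideal R} {x : X} :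
    (1 : R ⧸ I) ⊗ₜ[R] x = 0 ↔ x ∈ I • (⊤ : Submodule R X) := by
  rw [← TensorProduct.quotTensorEquivQuotSMul_symm_mk, LinearEquiv.map_eq_zero_iff,
    Submodule.Quotient.mk_eq_zero]

lemma TorSuccVanish.mem_smul_top {f : X' →ₗ[R] X} {g : X →ₗ[R] X''} (h : IsShortExact f g)
    [Module.Flat R X] {I : Ideal R} (hI : TorSuccVanish R 0 (R ⧸ I) X'') {x : X'}
    (hx : f x ∈ I • (⊤ : Submodule R X)) : x ∈ I • (⊤ : Submodule R X') := by
  rw [← one_tmul_eq_zero_iff_mem_smul_top] at hx ⊢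
  exact (zero_iff_injective_lTensor h).1 hI (hx.trans (map_zero _).symm)

lemma TorSuccVanish.quotMaximalIdeal [IsLocalRing R] {n : ℕ} [Nontrivial X]
    (hX : ∀ r ∈ maximalIdeal R, ∀ x : X, r • x = 0) (h : TorSuccVanish R n X Y) :
    TorSuccVanish R n (R ⧸ maximalIdeal R) Y := by
  have htors : Module.IsTorsionBySet R X (maximalIdeal R : Set R) := fun x r => hX r r.2 x
  let : Module (R ⧸ maximalIdeal R) X := htors.module
  have : IsScalarTower R (R ⧸ maximalIdeal R) X := htors.isScalarTower
  let : Field (R ⧸ maximalIdeal R) := Ideal.Quotient.field _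
  obtain ⟨x, hx⟩ := exists_ne (0 : X)
  obtain ⟨p, hp⟩ := LinearMap.exists_leftInverse_of_injective
    (LinearMap.toSpanSingleton (R ⧸ maximalIdeal R) X x) (LinearMap.ker_toSpanSingleton _ hx)
  exact of_retract (i := (LinearMap.toSpanSingleton _ X x).restrictScalars R)
    (r := p.restrictScalars R) (by ext; exact LinearMap.congr_fun hp _) h

/-- With `K` the kernel of a minimal free cover `F → X`, the quotient `K / (x₁, …, xₙ)K` embeds in
`F / (x₁, …, xₙ)F`, and `m K ⊆ m² F ⊆ (x₁, …, xₙ)F`. -/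
lemma smul_quotListSMulTop_ker_eq_zero [IsLocalRing R] {xs : List R}
    (hxs : maximalIdeal R ^ 2 ≤ Ideal.ofList xs) (h : TorSuccVanish R 0 (QuotListSMulTop xs R) X'')
    {g : X →ₗ[R] X''} (hg : Surjective g) [Module.Flat R X]
    (hker : LinearMap.ker g ≤ maximalIdeal R • ⊤) {r : R} (hr : r ∈ maximalIdeal R)
    (z : QuotListSMulTop xs (LinearMap.ker g)) : r • z = 0 := by
  obtain ⟨w, rfl⟩ := Submodule.mkQ_surjective _ z
  rw [← map_smul, Submodule.mkQ_apply, Submodule.Quotient.mk_eq_zero]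
  have h' : TorSuccVanish R 0 (R ⧸ Ideal.ofList xs) X'' :=
    (TorSuccVanish.congr_left (Submodule.quotEquivOfEq _ _ (by simp))).1 h
  refine h'.mem_smul_top (isShortExact_ker_subtype hg) (Submodule.smul_mono_left hxs ?_)
  rw [pow_two, Submodule.mul_smul]
  exact Submodule.smul_mem_smul hr (hker w.2)

lemma subsingleton_of_quotListSMulTop [IsLocalRing R] [Module.Finite R X] {xs : List R}
    (hm : ∀ r ∈ xs, r ∈ maximalIdeal R) [h : Subsingleton (QuotListSMulTop xs X)] :
    Subsingleton X := by
  by_contra hX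
  rw [not_subsingleton_iff_nontrivial] at hX
  refine Submodule.top_ne_ideal_smul_of_le_jacobson_annihilator (M := X)
    ((Ideal.span_le.2 hm).trans (maximalIdeal_le_jacobson _)) ?_
  exact (Submodule.Quotient.subsingleton_iff.1 h).symm

theorem free_or_torSuccVanish_quotMaximalIdeal [IsLocalRing R] [IsNoetherianRing R]
    [Module.Finite R X] {xs : List R} (hreg : IsWeaklyRegular R xs)
    (hm : ∀ r ∈ xs, r ∈ maximalIdeal R) (hxs : maximalIdeal R ^ 2 ≤ Ideal.ofList xs)
    (hX : ∀ i, TorSuccVanish R i (QuotListSMulTop xs R) X) {n : ℕ}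
    (h : ∀ i, n + 1 ≤ i → i ≤ n + 1 + xs.length → TorSuccVanish R i X Y) :
    Module.Free R X ∨ TorSuccVanish R (n + xs.length) (R ⧸ maximalIdeal R) Y := by
  obtain ⟨k, g, hg, hker⟩ := exists_minimal_free_cover (R := R) X
  have hK := isShortExact_ker_subtype hg
  have hreg_ker : IsWeaklyRegular (LinearMap.ker g) xs :=
    isWeaklyRegular_of_torSuccVanish_zero hreg hm ((TorSuccVanish.succ_iff_right hK).1 (hX 1))
  have hquot : TorSuccVanish R (n + xs.length) (QuotListSMulTop xs (LinearMap.ker g)) Y :=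
    .quotListSMulTop hreg_ker fun i hi hi' =>
      (TorSuccVanish.succ_iff_left hK).1 (h (i + 1) (by lia) (by lia))
  rcases subsingleton_or_nontrivial (QuotListSMulTop xs (LinearMap.ker g)) with hs | hn
  · left
    have hker_bot : LinearMap.ker g = ⊥ :=
      (Submodule.subsingleton_iff_eq_bot).1 (subsingleton_of_quotListSMulTop hm)
    exact .of_equiv (.ofBijective g ⟨LinearMap.ker_eq_bot.1 hker_bot, hg⟩)
  · exact .inr <| hquot.quotMaximalIdeal fun r hr =>
      smul_quotListSMulTop_ker_eq_zero hxs (hX 0) hg hker hr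

end MinimalMultiplicity

section Support

variable {R : Type u} [CommRing R] {q : PrimeSpectrum R}
variable {X X' X'' Y : Type u} [AddCommGroup X] [Module R X] [AddCommGroup X'] [Module R X']
  [AddCommGroup X''] [Module R X''] [AddCommGroup Y] [Module R Y]

lemma notMem_support_of_exact {f : X' →ₗ[R] X} {g : X →ₗ[R] X''} (h : Exact f g)
    (h' : q ∉ Module.support R X') (h'' : q ∉ Module.support R X'') :
    q ∉ Module.support R X := by
  rw [Module.notMem_support_iff'] at *
  intro x
  obtain ⟨r, hr, hgx⟩ := h'' (g x)
  obtain ⟨y, hy⟩ := (h (r • x)).1 (by rw [map_smul, hgx])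
  obtain ⟨s, hs, hsy⟩ := h' y
  refine ⟨s * r, q.2.mul_notMem hs hr, ?_⟩
  rw [mul_smul, ← hy, ← map_smul, hsy, map_zero]

lemma notMem_support_of_exact_smul [Module.Finite R X] {s : R} (hs : s ∈ q.asIdeal)
    {g : X →ₗ[R] X'} (h : Exact (fun x : X => s • x) g) (h' : q ∉ Module.support R X') :
    q ∉ Module.support R X := by
  have hker : LinearMap.ker g = s • (⊤ : Submodule R X) := by
    ext x
    simp [LinearMap.mem_ker, h x, Submodule.mem_smul_pointwise_iff_exists]
  have hsub := Module.support_subset_of_injective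
    ((s • (⊤ : Submodule R X)).liftQ g hker.ge)
    (LinearMap.ker_eq_bot.1 (Submodule.ker_liftQ_eq_bot _ _ _ hker.le))
  refine fun hq => h' (hsub ?_)
  rw [Module.support_quotSMulTop]
  exact ⟨hq, Set.singleton_subset_iff.2 hs⟩

lemma exists_isSMulRegular_forall_mem_support_lt {p : PrimeSpectrum R} (h : p < q) :
    ∃ s ∈ q.asIdeal, IsSMulRegular (R ⧸ p.asIdeal) s ∧
      ∀ p' ∈ Module.support R (QuotSMulTop s (R ⧸ p.asIdeal)), p < p' := by
  obtain ⟨s, hsq, hsp⟩ := SetLike.exists_of_lt (show p.asIdeal < q.asIdeal from h)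
  refine ⟨s, hsq, ?_, fun p' hp' => ?_⟩
  · refine (isSMulRegular_algebraMap_iff (R ⧸ p.asIdeal)).1 (IsSMulRegular.of_ne_zero ?_)
    exact fun h0 => hsp (Ideal.Quotient.eq_zero_iff_mem.1 h0)
  · rw [Module.support_quotSMulTop, Module.support_eq_zeroLocus, Ideal.annihilator_quotient] at hp'
    refine lt_of_le_not_ge hp'.1 fun hle => hsp (hle (hp'.2 rfl))

namespace torSucc

variable {n : ℕ}

lemma notMem_support_of_forall_quotient_prime [IsNoetherianRing R] [hX : Module.Finite R X]
    (h : ∀ p ∈ Module.support R X, q ∉ Module.support R (torSucc R n (R ⧸ p.asIdeal) Y)) :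
    q ∉ Module.support R (torSucc R n X Y) := by
  induction hX using IsNoetherianRing.induction_on_isQuotientEquivQuotientPrime R with
  | subsingleton X =>
    have : Subsingleton (torSucc R n X Y) := torOne.subsingleton_of_flat
    simp [Module.support_eq_empty]
  | quotient X p e =>
    have hp : p ∈ Module.support R X := by
      rw [e.support_eq, Module.support_eq_zeroLocus, Ideal.annihilator_quotient]
      exact le_refl p.asIdeal
    exact fun hq => h p hp (Module.support_subset_of_injective (congrLeft n Y e).toLinearMap
      (congrLeft n Y e).injective hq)
  | exact X₁ X₂ X₃ f g hf hg hfg h₁ h₃ =>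
    rw [Module.support_of_exact hfg hf hg] at h
    exact notMem_support_of_exact (exact_map n Y ⟨hf, hfg, hg⟩)
      (h₁ fun p hp => h p (.inl hp)) (h₃ fun p hp => h p (.inr hp))

variable [IsNoetherianRing R] [Module.Finite R Y]

lemma notMem_support_of_quotSMulTop [Module.Finite R X] {s : R} (hs : s ∈ q.asIdeal)
    (hreg : IsSMulRegular X s) (h : q ∉ Module.support R (torSucc R n (QuotSMulTop s X) Y)) :
    q ∉ Module.support R (torSucc R n X Y) :=
  have := torSucc.finite (R := R) n X Y
  notMem_support_of_exact_smul hs (exact_smul_map_mkQ n Y hreg) h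

lemma notMem_support_of_quotient_prime [Module.Finite R X]
    (h : q ∉ Module.support R (torSucc R n (R ⧸ q.asIdeal) Y)) :
    q ∉ Module.support R (torSucc R n X Y) := by
  have : WellFoundedGT (PrimeSpectrum R) :=
    StrictMono.wellFoundedGT (f := PrimeSpectrum.asIdeal) fun _ _ h => h
  suffices ∀ p : PrimeSpectrum R, q ∉ Module.support R (torSucc R n (R ⧸ p.asIdeal) Y) from
    notMem_support_of_forall_quotient_prime fun p _ => this p
  intro p
  induction p using WellFoundedGT.induction with
  | ind p ih =>
    by_cases hpq : p ≤ q
    · obtain rfl | hlt := hpq.eq_or_lt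
      · exact h
      obtain ⟨s, hs, hreg, hlt'⟩ := exists_isSMulRegular_forall_mem_support_lt hlt
      exact notMem_support_of_quotSMulTop hs hreg
        (notMem_support_of_forall_quotient_prime fun p' hp' => ih p' (hlt' p' hp'))
    · obtain ⟨s, hsp, hsq⟩ := SetLike.not_le_iff_exists.1 (show ¬p.asIdeal ≤ q.asIdeal from hpq)
      rw [Module.notMem_support_iff']
      refine fun t => ⟨s, hsq, smul_eq_zero_of_left (fun x => ?_) t⟩
      rw [← algebraMap_smul (R ⧸ p.asIdeal), Ideal.Quotient.algebraMap_eq,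
        Ideal.Quotient.eq_zero_iff_mem.2 hsp, zero_smul]

/-- As `R / (ys)` has no `Tor` in these degrees, the embedding bounds the support of each
`Tor (R ⧸ q) Y` by that of the next `Tor` of its cokernel, which is `0` far enough out. -/
lemma notMem_support_of_injective [Module.Finite R X] {n₀ : ℕ}
    (hY : ∀ (X : Type u) [AddCommGroup X] [Module R X] [Module.Finite R X] (i : ℕ), n₀ ≤ i →
      TorSuccVanish R i X Y)
    {ys : List R} (hys : IsWeaklyRegular R ys) {f : (R ⧸ q.asIdeal) →ₗ[R] QuotListSMulTop ys R}
    (hf : Injective f) (hn : ys.length ≤ n) : q ∉ Module.support R (torSucc R n X Y) := by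
  obtain hn₀ | hn₀ := le_total n₀ n
  · simp [Module.support_eq_empty_iff.2 (hY X n hn₀)]
  induction hn₀ using Nat.decreasingInduction generalizing X with
  | self => simp [Module.support_eq_empty_iff.2 (hY X n₀ le_rfl)]
  | of_succ n _ ih =>
    refine notMem_support_of_quotient_prime ?_
    obtain ⟨δ, -, hδf⟩ := exists_connecting n Y ⟨hf, LinearMap.exact_map_mkQ_range f,
      Submodule.mkQ_surjective _⟩
    refine notMem_support_of_exact
      (X' := torSucc R (n + 1) (QuotListSMulTop ys R ⧸ LinearMap.range f) Y)
      (X := torSucc R n (R ⧸ q.asIdeal) Y) (X'' := torSucc R n (QuotListSMulTop ys R) Y)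
      hδf (ih (by lia)) ?_
    simp [Module.support_eq_empty_iff.2 (TorSuccVanish.quotListSMulTop_self hys hn)]

end torSucc

namespace TorSuccVanish

variable [IsLocalRing R] [IsNoetherianRing R] [Module.Finite R X] [Module.Finite R Y] {n i : ℕ}

lemma of_closedPoint_notMem_support (h : closedPoint R ∉ Module.support R (torSucc R n X Y)) :
    TorSuccVanish R n X Y := by
  have := torSucc.finite (R := R) n X Y
  refine not_nontrivial_iff_subsingleton.1 fun hnt => h ?_
  exact closedPoint_mem_support R (torSucc R n X Y)

lemma of_quotMaximalIdeal (h : TorSuccVanish R n (R ⧸ maximalIdeal R) Y) (hi : n ≤ i) :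
    TorSuccVanish R i X Y := by
  obtain ⟨k, rfl⟩ := Nat.exists_eq_add_of_le hi
  obtain ⟨Ω, _, hΩ⟩ := exists_finite_syzygy (R := R) k X
  exact (hΩ n Y).1 <| of_closedPoint_notMem_support <|
    torSucc.notMem_support_of_quotient_prime (q := closedPoint R)
      fun hmem => (Module.support_eq_empty_iff.2 h).le hmem

end TorSuccVanish

lemma torSucc.exists_injective_quotListSMulTop {n : ℕ} {ys : List R} (hys : IsWeaklyRegular X ys)
    (h : ∀ i, n < i → TorSuccVanish R i X Y) :
    ∃ δ : torSucc R (n + ys.length) (QuotListSMulTop ys X) Y →ₗ[R] torSucc R n X Y,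
      Injective δ ∧ ∀ t, (∀ r ∈ ys, r • t = 0) → t ∈ LinearMap.range δ := by
  induction ys generalizing X n with
  | nil =>
    let e := congrLeft n Y (quotListSMulTopNilEquiv R X)
    exact ⟨e.toLinearMap, e.injective, fun t _ => e.surjective t⟩
  | cons r rs ih =>
    obtain ⟨hr, hrs⟩ := (isWeaklyRegular_cons_iff X r rs).1 hys
    obtain ⟨δ, hδ, hδr⟩ := exists_injective_torsion_le_range hr (h (n + 1) n.lt_succ_self)
    have h' (i : ℕ) (hi : n + 1 < i) : TorSuccVanish R i (QuotSMulTop r X) Y := by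
      obtain ⟨i, rfl⟩ := Nat.exists_eq_add_of_lt hi
      exact .quotSMulTop hr (h _ (by lia)) (h _ (by lia))
    obtain ⟨ε, hε, hεr⟩ := ih hrs h'
    rw [List.length_cons, show n + (rs.length + 1) = n + 1 + rs.length by lia]
    let e := congrLeft (n + 1 + rs.length) Y
      (Submodule.quotOfListConsSMulTopEquivQuotSMulTopInner X r rs)
    refine ⟨δ ∘ₗ ε ∘ₗ e.toLinearMap, hδ.comp (hε.comp e.injective), fun t ht => ?_⟩
    obtain ⟨htr, htrs⟩ := List.forall_mem_cons.1 ht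
    obtain ⟨s, rfl⟩ := hδr t htr
    obtain ⟨w, rfl⟩ := hεr s fun a ha => hδ (by rw [map_smul, htrs a ha, map_zero])
    exact ⟨e.symm w, by simp⟩

end Support

section DepthSensitivity

variable {R : Type u} [CommRing R] [IsNoetherianRing R]

lemma exists_le_isAssociatedPrime_of_forall_not_isSMulRegular {X : Type u} [AddCommGroup X]
    [Module R X] [Module.Finite R X] {p : Ideal R} (h : ∀ r ∈ p, ¬IsSMulRegular X r) :
    ∃ q, IsAssociatedPrime q X ∧ p ≤ q := by
  refine (Ideal.subset_union_prime_finite (associatedPrimes.finite R X) (f := id) ⊤ ⊤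
    fun q hq _ _ => hq.isPrime).1 ?_
  simp only [id, biUnion_associatedPrimes_eq_compl_regular]
  exact h

variable [IsLocalRing R]

lemma exists_append_isWeaklyRegular_le_isAssociatedPrime {p : Ideal R}
    (hp : p ≤ maximalIdeal R) {ys : List R} (hys : IsWeaklyRegular R ys) (hyp : ∀ r ∈ ys, r ∈ p) :
    ∃ zs, (∀ r ∈ ys ++ zs, r ∈ p) ∧ IsWeaklyRegular R (ys ++ zs) ∧
      ∃ q, IsAssociatedPrime q (QuotListSMulTop (ys ++ zs) R) ∧ p ≤ q := by
  by_cases h : ∀ r ∈ p, ¬IsSMulRegular (QuotListSMulTop ys R) r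
  · refine ⟨[], ?_⟩
    rw [List.append_nil]
    exact ⟨hyp, hys, exists_le_isAssociatedPrime_of_forall_not_isSMulRegular h⟩
  push Not at h
  obtain ⟨r, hr, hreg⟩ := h
  have hle : Ideal.ofList ys ≤ maximalIdeal R := (Ideal.span_le.2 hyp).trans hp
  have : Ideal.ofList ys < Ideal.ofList (ys ++ [r]) := by
    rw [Ideal.ofList_append, left_lt_sup, Ideal.ofList_singleton, Ideal.span_singleton_le_iff_mem]
    intro hmem
    have h1 : r • (Submodule.Quotient.mk 1 : QuotListSMulTop ys R) = 0 := by
      rw [← Submodule.Quotient.mk_smul, Submodule.Quotient.mk_eq_zero]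
      exact Submodule.smul_mem_smul hmem trivial
    have h0 := (Submodule.Quotient.mk_eq_zero _).1 (hreg.right_eq_zero_of_smul h1)
    rw [smul_eq_mul, Ideal.mul_top] at h0
    exact (Ideal.ne_top_iff_one _).1 (ne_top_of_le_ne_top (Ideal.IsPrime.ne_top') hle) h0
  obtain ⟨zs, h⟩ := exists_append_isWeaklyRegular_le_isAssociatedPrime hp (ys := ys ++ [r])
    ((isWeaklyRegular_append_iff R ys [r]).2 ⟨hys, (isWeaklyRegular_singleton_iff _ r).2 hreg⟩)
    (List.forall_mem_append.2 ⟨hyp, List.forall_mem_singleton.2 hr⟩)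
  exact ⟨r :: zs, List.append_cons ys r zs ▸ h⟩
termination_by wellFounded_gt.wrap (Ideal.ofList ys)
decreasing_by assumption

lemma length_le_ringKrullDim {ys : List R} (hys : IsWeaklyRegular R ys)
    (hm : ∀ r ∈ ys, r ∈ maximalIdeal R) : (ys.length : WithBot ℕ∞) ≤ ringKrullDim R := by
  have hne : Ideal.ofList ys ≠ ⊤ :=
    ne_top_of_le_ne_top Ideal.IsPrime.ne_top' (Ideal.span_le.2 hm)
  have := Ideal.Quotient.nontrivial_iff.2 hne
  rw [← ringKrullDim_add_length_eq_ringKrullDim_of_isRegular ys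
    ((isRegular_iff_isWeaklyRegular_of_subset_maximalIdeal hm).2 hys)]
  exact le_add_of_nonneg_left ringKrullDim_nonneg_of_nontrivial

lemma exists_pow_mem_ofList_of_ringKrullDim_le {ys : List R} (hys : IsWeaklyRegular R ys)
    (hm : ∀ r ∈ ys, r ∈ maximalIdeal R) (hdim : ringKrullDim R ≤ ys.length) {r : R}
    (hr : r ∈ maximalIdeal R) : ∃ k : ℕ, r ^ k ∈ Ideal.ofList ys := by
  have hne : Ideal.ofList ys ≠ ⊤ :=
    ne_top_of_le_ne_top Ideal.IsPrime.ne_top' (Ideal.span_le.2 hm)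
  have := Ideal.Quotient.nontrivial_iff.2 hne
  have : IsLocalRing (R ⧸ Ideal.ofList ys) := .of_surjective' _ Ideal.Quotient.mk_surjective
  have := IsLocalHom.of_surjective (Ideal.Quotient.mk (Ideal.ofList ys))
    Ideal.Quotient.mk_surjective
  have : Ring.KrullDimLE 0 (R ⧸ Ideal.ofList ys) := by
    rw [← ringKrullDim_add_length_eq_ringKrullDim_of_isRegular ys
      ((isRegular_iff_isWeaklyRegular_of_subset_maximalIdeal hm).2 hys)] at hdim
    rw [Ring.krullDimLE_iff, ← ENat.WithBot.add_le_add_natCast_right_iff (c := ys.length)]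
    simpa using hdim
  have hnil : IsNilpotent (Ideal.Quotient.mk (Ideal.ofList ys) r) := by
    rw [Ring.KrullDimLE.isNilpotent_iff_mem_maximalIdeal]
    exact map_mem_nonunits_iff _ _ |>.2 hr
  obtain ⟨k, hk⟩ := hnil
  exact ⟨k, Ideal.Quotient.eq_zero_iff_mem.1 (by rw [map_pow, hk])⟩

lemma length_le_of_isAssociatedPrime_maximalIdeal {xs ys : List R} (hxs : IsWeaklyRegular R xs)
    (hxm : ∀ r ∈ xs, r ∈ maximalIdeal R) (hys : IsWeaklyRegular R ys)
    (h : IsAssociatedPrime (maximalIdeal R) (QuotListSMulTop ys R)) :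
    xs.length ≤ ys.length := by
  by_contra! hlt
  obtain ⟨n, hn⟩ := Nat.exists_eq_add_one_of_ne_zero (Nat.ne_zero_of_lt hlt)
  obtain ⟨-, f, hf⟩ := (isAssociatedPrime_iff_exists_injective_linearMap _ _).1 h
  have hvanish (I : Ideal R) : TorSuccVanish R n (R ⧸ I) (QuotListSMulTop xs R) :=
    .of_closedPoint_notMem_support <| torSucc.notMem_support_of_injective (n₀ := xs.length)
      (fun X _ _ _ i hi => TorSuccVanish.comm.1 (.quotListSMulTop_self hxs hi)) hys
      (q := closedPoint R) hf (by lia)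
  have hpd := projectiveDimension_lt_iff.2 (hasProjectiveDimensionLE_of_torSuccVanish hvanish)
  have : Projective (ModuleCat.of R R) := (IsProjective.iff_projective R).1 inferInstance
  rw [ModuleCat.projectiveDimension_quotient_eq_add_length_of_isWeaklyRegular (.of R R) xs hxs hxm,
    ModuleCat.projectiveDimension_eq_zero_of_projective, hn, zero_add] at hpd
  exact hpd.ne rfl

/-- Extend `ys` until the maximal ideal is associated to `R / (ys)`: then `ys` is at least as long
as `xs`, so that the `xs` are nilpotent modulo `ys`. -/
theorem isWeaklyRegular_of_ringKrullDim_le {X : Type u} [AddCommGroup X] [Module R X]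
    [Module.Finite R X] {xs ys : List R} (hdim : ringKrullDim R ≤ xs.length)
    (hxm : ∀ r ∈ xs, r ∈ maximalIdeal R) (hxs : IsWeaklyRegular R xs) (hX : IsWeaklyRegular X xs)
    (hym : ∀ r ∈ ys, r ∈ maximalIdeal R) (hys : IsWeaklyRegular R ys) : IsWeaklyRegular X ys := by
  obtain ⟨zs, hm, hreg, q, hq, hmq⟩ :=
    exists_append_isWeaklyRegular_le_isAssociatedPrime le_rfl hys hym
  obtain rfl : maximalIdeal R = q := (maximalIdeal.isMaximal R).eq_of_le hq.isPrime.ne_top hmq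
  have hlen := length_le_of_isAssociatedPrime_maximalIdeal hxs hxm hreg hq
  have hlen' : (ys ++ zs).length ≤ xs.length := by
    exact_mod_cast (length_le_ringKrullDim hreg hm).trans hdim
  rw [le_antisymm hlen hlen'] at hdim
  have hvanish : TorSuccVanish R 0 X (QuotListSMulTop (ys ++ zs) R) :=
    TorSuccVanish.quotListSMulTop_right hX hreg
      (fun r hr => exists_pow_mem_ofList_of_ringKrullDim_le hreg hm hdim (hxm r hr)) (by lia)
  exact ((isWeaklyRegular_append_iff X ys zs).1 <|
    isWeaklyRegular_of_torSuccVanish_zero hreg hm (TorSuccVanish.comm.1 hvanish)).1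

end DepthSensitivity

section Vanishing

variable {R : Type u} [CommRing R] [IsNoetherianRing R] [IsLocalRing R]
variable {X Y : Type u} [AddCommGroup X] [Module R X] [Module.Finite R X]
  [AddCommGroup Y] [Module R Y] [Module.Finite R Y]

namespace TorSuccVanish

variable {n n₀ : ℕ}

/-- If `t` has annihilator the prime `p`, take `zs` regular in `p` and maximal, with a prime `q ≥ p`
associated to `R / (zs)`: then `t` lifts to `Tor (X / (zs)X) Y`, which vanishes at `q`, so some
element outside `q` annihilates `t`. -/
lemma of_forall_lt (hX : ∀ ys : List R, (∀ r ∈ ys, r ∈ maximalIdeal R) → IsWeaklyRegular R ys →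
      IsWeaklyRegular X ys)
    (hY : TorSuccVanish R n₀ (R ⧸ maximalIdeal R) Y) (h : ∀ i, n < i → TorSuccVanish R i X Y) :
    TorSuccVanish R n X Y := by
  by_contra hne
  have : Nontrivial (torSucc R n X Y) := not_subsingleton_iff_nontrivial.1 hne
  obtain ⟨p, hp⟩ := associatedPrimes.nonempty R (torSucc R n X Y)
  obtain ⟨hp, t, rfl⟩ := isAssociatedPrime_iff.1 hp
  have hpm := le_maximalIdeal hp.ne_top
  obtain ⟨zs, hzp, hzs, q, hq, hpq⟩ :=
    exists_append_isWeaklyRegular_le_isAssociatedPrime (ys := []) hpm (.nil R R) (by simp)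
  obtain ⟨hqp, f, hf⟩ := (isAssociatedPrime_iff_exists_injective_linearMap _ _).1 hq
  obtain ⟨δ, -, hδ⟩ := torSucc.exists_injective_quotListSMulTop
    (hX zs (fun r hr => hpm (hzp r hr)) hzs) h
  obtain ⟨w, rfl⟩ := hδ t fun r hr => Submodule.mem_colon_singleton.1 (hzp r hr)
  have hsupp : (⟨q, hqp⟩ : PrimeSpectrum R) ∉
      Module.support R (torSucc R (n + zs.length) (QuotListSMulTop zs X) Y) :=
    torSucc.notMem_support_of_injective (fun _ _ _ _ _ => hY.of_quotMaximalIdeal) hzs hf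
      (Nat.le_add_left _ _)
  obtain ⟨s, hs, hsw⟩ := Module.notMem_support_iff'.1 hsupp w
  exact hs (hpq (Submodule.mem_colon_singleton.2 (by rw [← map_smul, hsw, map_zero]; rfl)))

lemma of_quotMaximalIdeal_of_forall_isWeaklyRegular
    (hX : ∀ ys : List R, (∀ r ∈ ys, r ∈ maximalIdeal R) → IsWeaklyRegular R ys →
      IsWeaklyRegular X ys)
    (hY : TorSuccVanish R n₀ (R ⧸ maximalIdeal R) Y) : TorSuccVanish R n X Y := by
  suffices ∀ i, n ≤ i → TorSuccVanish R i X Y from this n le_rfl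
  obtain hn | hn := le_total n₀ n
  · exact fun i hi => hY.of_quotMaximalIdeal (hn.trans hi)
  induction hn using Nat.decreasingInduction with
  | self => exact fun i hi => hY.of_quotMaximalIdeal hi
  | of_succ k _ ih =>
    intro i hi
    obtain rfl | hlt := hi.eq_or_lt
    · exact of_forall_lt hX hY ih
    · exact ih i hlt

end TorSuccVanish

variable {xs : List R}

/-- A sufficiently high syzygy `Ω` of `X` satisfies `Tor (R / (xs)) Ω = 0`, so that the alternative
of `free_or_torSuccVanish_quotMaximalIdeal` applies to it. -/
theorem torSuccVanish_and_hasProjectiveDimensionLE_or (hdim : ringKrullDim R ≤ xs.length)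
    (hxm : ∀ r ∈ xs, r ∈ maximalIdeal R) (hxs : IsWeaklyRegular R xs)
    (hm : maximalIdeal R ^ 2 ≤ Ideal.ofList xs) {rs : List R}
    (hrm : ∀ r ∈ rs, r ∈ maximalIdeal R) (hrs : IsWeaklyRegular X rs) {k n : ℕ}
    (hk : xs.length ≤ k + rs.length)
    (h : ∀ i, n + 1 + k ≤ i → i ≤ n + 1 + k + xs.length → TorSuccVanish R i X Y) :
    (∀ i, k ≤ i → TorSuccVanish R i X Y) ∧
      ((∃ n, HasProjectiveDimensionLE (ModuleCat.of R X) n) ∨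
        ∃ n, HasProjectiveDimensionLE (ModuleCat.of R Y) n) := by
  obtain ⟨Ω, _, hΩ⟩ := exists_finite_syzygy (R := R) k X
  have hΩx (i : ℕ) : TorSuccVanish R i (QuotListSMulTop xs R) Ω :=
    TorSuccVanish.comm.1 <| (hΩ i _).2 <| .quotListSMulTop_right hrs hxs
      (fun r hr => ⟨2, hm (Ideal.pow_mem_pow (hrm r hr) 2)⟩) (by lia)
  obtain hfree | hres := free_or_torSuccVanish_quotMaximalIdeal (Y := Y) (n := n) hxs hxm hm hΩx
    fun i hi hi' => (hΩ i Y).2 (h _ (by lia) (by lia))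
  · have hX (i : ℕ) (hi : k ≤ i) (Z : Type u) [AddCommGroup Z] [Module R Z] :
        TorSuccVanish R i X Z := by
      obtain ⟨i, rfl⟩ := Nat.exists_eq_add_of_le' hi
      exact (hΩ i Z).1 (.of_flat_left i)
    exact ⟨fun i hi => hX i hi Y, .inl ⟨k, hasProjectiveDimensionLE_of_torSuccVanish fun I =>
      TorSuccVanish.comm.1 (hX k le_rfl (R ⧸ I))⟩⟩
  · refine ⟨fun i hi => ?_, .inr ⟨_, hasProjectiveDimensionLE_of_torSuccVanish fun I =>
      hres.of_quotMaximalIdeal le_rfl⟩⟩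
    obtain ⟨i, rfl⟩ := Nat.exists_eq_add_of_le' hi
    refine (hΩ i Y).1 (.of_quotMaximalIdeal_of_forall_isWeaklyRegular (fun ys hym hys => ?_) hres)
    exact isWeaklyRegular_of_ringKrullDim_le hdim hxm hxs
      (isWeaklyRegular_of_torSuccVanish_zero hxs hxm (hΩx 0)) hym hys

theorem torSuccVanish_and_hasProjectiveDimensionLE_or_of_deformation
    {S : Type u} [CommRing S] [IsLocalRing S] [Algebra R S] [Module S X] [IsScalarTower R S X]
    [Module S Y] [IsScalarTower R S Y] (hs : Surjective (algebraMap R S)) {fs : List R}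
    (hfs : IsWeaklyRegular R fs) (hker : RingHom.ker (algebraMap R S) = Ideal.ofList fs)
    (hdim : ringKrullDim R ≤ xs.length) (hxm : ∀ r ∈ xs, r ∈ maximalIdeal R)
    (hxs : IsWeaklyRegular R xs) (hm : maximalIdeal R ^ 2 ≤ Ideal.ofList xs) {rs : List S}
    (hrm : ∀ r ∈ rs, r ∈ maximalIdeal S) (hrs : IsWeaklyRegular X rs) {a t : ℕ}
    (ht : xs.length ≤ t + fs.length + rs.length) (ha : t + 1 ≤ a)
    (h : ∀ i, a ≤ i → i ≤ a + fs.length + xs.length → TorSuccVanish S i X Y) :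
    (∀ i, t ≤ i → TorSuccVanish S i X Y) ∧
      ((∃ n, HasProjectiveDimensionLE (ModuleCat.of R X) n) ∨
        ∃ n, HasProjectiveDimensionLE (ModuleCat.of R Y) n) := by
  obtain ⟨rs, rfl⟩ := List.map_surjective_iff.2 hs rs
  have hrm' (r : R) (hr : r ∈ rs) : r ∈ maximalIdeal R := fun hu =>
    hrm _ (List.mem_map_of_mem hr) (hu.map (algebraMap R S))
  rw [isWeaklyRegular_map_algebraMap_iff] at hrs
  rw [List.length_map] at ht
  obtain ⟨n, rfl⟩ := Nat.exists_eq_add_of_le' ha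
  have hchain := changeOfRingsChain X Y hfs hs hker
  obtain ⟨hvanish, hpd⟩ := torSuccVanish_and_hasProjectiveDimensionLE_or (Y := Y) (n := n) hdim hxm
    hxs hm hrm' hrs ht fun i hi hi' => hchain.descend h (by lia) (by lia)
  exact ⟨fun i hi => hchain.ascend (by lia) hvanish (fun i hi hi' => h i hi (by lia)) hi, hpd⟩

end Vanishing

section Depth

lemma exists_isWeaklyRegular_of_depth_eq {R : Type} [CommRing R] [IsLocalRing R] {M : Type}
    [AddCommGroup M] [Module R M] {t : ℕ} (h : depth R M = t) :
    ∃ rs : List R, (∀ r ∈ rs, r ∈ maximalIdeal R) ∧ IsWeaklyRegular M rs ∧ rs.length = t := by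
  let lengths : Set ℕ∞ := {n | ∃ rs : List R, (∀ r ∈ rs, r ∈ maximalIdeal R) ∧
    IsRegular M rs ∧ (rs.length : ℕ∞) = n}
  change sSup lengths = t at h
  obtain hempty | hne := lengths.eq_empty_or_nonempty
  · rw [hempty, sSup_empty, bot_eq_zero] at h
    exact ⟨[], by simp, .nil R M, by exact_mod_cast h⟩
  · have := hne.to_subtype
    have hmem := ENat.sSup_mem_of_nonempty_of_lt_top (h ▸ ENat.natCast_lt_top t : sSup lengths < ⊤)
    rw [h] at hmem
    obtain ⟨rs, hrm, hrs, hlen⟩ := hmem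
    exact ⟨rs, hrm, hrs.toIsWeaklyRegular, by exact_mod_cast hlen⟩

end Depth

theorem statement17 (R : Type) [CommRing R] [IsNoetherianRing R] [IsLocalRing R]
    (d : ℕ) (hdim : ringKrullDim R = (d : WithBot ℕ∞)) (hCM : depth R R = (d : ℕ∞))
    (hmin : HasMinimalMultiplicity R d)
    (c : ℕ) (fs : List R) (hlen : fs.length = c) (hmem : ∀ x ∈ fs, x ∈ maximalIdeal R)
    (hreg : RingTheory.Sequence.IsWeaklyRegular R fs)
    [IsLocalRing (R ⧸ Ideal.ofList fs)]
    (M N : Type) [AddCommGroup M] [Module R M] [Module (R ⧸ Ideal.ofList fs) M]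
    [Module.Finite (R ⧸ Ideal.ofList fs) M]
    (hMcompat : ∀ (r : R) (a : M), (Ideal.Quotient.mk (Ideal.ofList fs) r) • a = r • a)
    [AddCommGroup N] [Module R N] [Module (R ⧸ Ideal.ofList fs) N]
    [Module.Finite (R ⧸ Ideal.ofList fs) N]
    (hNcompat : ∀ (r : R) (a : N), (Ideal.Quotient.mk (Ideal.ofList fs) r) • a = r • a)
    (dS tS : ℕ) (hdS : ringKrullDim (R ⧸ Ideal.ofList fs) = (dS : WithBot ℕ∞))
    (htS : depth (R ⧸ Ideal.ofList fs) M = (tS : ℕ∞)) :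
    ((∃ a : ℕ, dS - tS + 2 ≤ a ∧ ∀ i : ℕ, a ≤ i → i ≤ a + (d + c) →
        TorVanish (R ⧸ Ideal.ofList fs) M N i) ↔
      (∀ i : ℕ, dS - tS + 1 ≤ i → TorVanish (R ⧸ Ideal.ofList fs) M N i)) ∧
    ((∀ i : ℕ, dS - tS + 1 ≤ i → TorVanish (R ⧸ Ideal.ofList fs) M N i) →
      ProjDimFinite R M ∨ ProjDimFinite R N) := by
  have : IsScalarTower R (R ⧸ Ideal.ofList fs) M := .of_algebraMap_smul hMcompat
  have : IsScalarTower R (R ⧸ Ideal.ofList fs) N := .of_algebraMap_smul hNcompat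
  have : Module.Finite R M := .trans (R ⧸ Ideal.ofList fs) M
  have : Module.Finite R N := .trans (R ⧸ Ideal.ofList fs) N
  obtain ⟨xs, hlen_xs, hxm, hxs, hm⟩ := hmin
  obtain ⟨rs, hrm, hrs, hlen_rs⟩ := exists_isWeaklyRegular_of_depth_eq htS
  have hdim_add := ringKrullDim_add_length_eq_ringKrullDim_of_isRegular fs
    ((isRegular_iff_isWeaklyRegular_of_subset_maximalIdeal hmem).2 hreg)
  rw [hdS, hdim, hlen] at hdim_add
  norm_cast at hdim_add
  have key (a : ℕ) (ha : dS - tS + 2 ≤ a) (h : ∀ i, a ≤ i → i ≤ a + (d + c) →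
      TorVanish (R ⧸ Ideal.ofList fs) M N i) :
      (∀ i, dS - tS + 1 ≤ i → TorVanish (R ⧸ Ideal.ofList fs) M N i) ∧
        (ProjDimFinite R M ∨ ProjDimFinite R N) := by
    obtain ⟨hvanish, hpd⟩ := torSuccVanish_and_hasProjectiveDimensionLE_or_of_deformation
      Ideal.Quotient.mk_surjective hreg Ideal.mk_ker (hdim.trans_le (by rw [hlen_xs])) hxm hxs
      (hm.le.trans Ideal.mul_le_left) hrm hrs (a := a - 1) (t := dS - tS) (by lia) (by lia)
      fun i hi hi' => (torVanish_succ_iff i).1 (h (i + 1) (by lia) (by lia))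
    refine ⟨fun i hi => ?_, hpd.imp projDimFinite_of_hasProjectiveDimensionLE
      projDimFinite_of_hasProjectiveDimensionLE⟩
    obtain ⟨i, rfl⟩ := Nat.exists_eq_add_of_le' (Nat.le_of_add_left_le hi)
    exact (torVanish_succ_iff i).2 (hvanish i (by lia))
  exact ⟨⟨fun ⟨a, ha, h⟩ => (key a ha h).1, fun h => ⟨_, le_rfl, fun i hi _ => h i (by lia)⟩⟩,
    fun h => (key _ le_rfl fun i hi _ => h i (by lia)).2⟩
end
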